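/- arXiv:2403.15844 — 2 statements merged into one kernel-verified Lean document; each statement's English description precedes it below -/
import Mathlib

section
/- Let B be a standard graded polynomial ring over a field K and let I ⊆ B be a graded ideal of linear type with μ(I) = ht(I) + 1 = n + 1 and pd_B(B/I) = n (e.g., I perfect). Then the Rees algebra R(I) is Cohen-Macaulay. -/
open Ideal

/-- A (proper) regular sequence. -/
def IsRegSeq {A : Type*} [CommRing A] {n : ℕ} (f : Fin n → A) : Prop :=
  (∀ i : Fin n, ∀ a : A, a * f i ∈ Ideal.span (f '' {j | j < i}) →
      a ∈ Ideal.span (f '' {j | j < i}))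
  ∧ Ideal.span (Set.range f) ≠ ⊤

/-- The element `f·X ∈ R(I)` for `f ∈ I`. -/
noncomputable def fX {B : Type*} [CommRing B] (I : Ideal B) (g : B) (hg : g ∈ I) :
    reesAlgebra I :=
  ⟨Polynomial.C g * Polynomial.X, by
    rw [mem_reesAlgebra_iff]
    intro i
    rcases eq_or_ne i 1 with h | h
    · subst h; simpa using hg
    · simp [Polynomial.coeff_C_mul, Polynomial.coeff_X, h, Ne.symm h]⟩

/-- The presentation `S = B[y_0,…,y_n] → R(I)`, `y_j ↦ f_j X`. -/
noncomputable def reesStructureMap {B : Type*} [CommRing B] {n : ℕ} (I : Ideal B)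
    (f : Fin (n + 1) → B) (hf : ∀ j, f j ∈ I) :
    MvPolynomial (Fin (n + 1)) B →ₐ[B] reesAlgebra I :=
  MvPolynomial.aeval (fun j => fX I (f j) (hf j))

/-- The `S`-module structure on `R(I)` induced by the presentation. -/
noncomputable def reesModule {B : Type*} [CommRing B] {n : ℕ} (I : Ideal B)
    (f : Fin (n + 1) → B) (hf : ∀ j, f j ∈ I) :
    Module (MvPolynomial (Fin (n + 1)) B) (reesAlgebra I) :=
  Module.compHom _ (reesStructureMap I f hf).toRingHom

/-- `p ∈ S` is linear in the `y`-variables. -/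
def YLinear {B : Type*} [CommRing B] {n : ℕ} (p : MvPolynomial (Fin (n + 1)) B) : Prop :=
  ∀ w : Fin (n + 1) →₀ ℕ, MvPolynomial.coeff w p ≠ 0 → (∑ j, w j) ≤ 1

/-- `I` is of linear type (with respect to the presentation `φ` coming from the chosen
generators): the defining ideal of the Rees algebra is generated by elements that are
linear in the second set of variables. -/
def IsLinearTypePres {B : Type*} [CommRing B] {n : ℕ} {I : Ideal B}
    (φ : MvPolynomial (Fin (n + 1)) B →ₐ[B] reesAlgebra I) : Prop :=
  ∃ G : Set (MvPolynomial (Fin (n + 1)) B),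
    (∀ p ∈ G, YLinear p) ∧ RingHom.ker φ.toRingHom = Ideal.span G

/-- A free resolution of `M` over `A`. -/
structure FreeRes (A : Type*) [CommRing A] (M : Type*) [AddCommGroup M] [Module A M] where
  ι : ℕ → Type
  d : ∀ i, (ι (i + 1) →₀ A) →ₗ[A] (ι i →₀ A)
  ε : (ι 0 →₀ A) →ₗ[A] M
  exact_d : ∀ i, Function.Exact (d (i + 1)) (d i)
  exact_ε : Function.Exact (d 0) ε
  surj : Function.Surjective ε

/-- Projective dimension, as the least length of a free resolution. -/
noncomputable def projDim (A : Type*) [CommRing A] (M : Type*) [AddCommGroup M]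
    [Module A M] : ℕ∞ :=
  sInf {e : ℕ∞ | ∃ k : ℕ, e = (k : ℕ∞) ∧
    ∃ R : FreeRes A M, ∀ i : ℕ, k < i → IsEmpty (R.ι i)}

/-- The height of an ideal: the infimum of the heights of primes containing it. -/
noncomputable def idealHeight {A : Type*} [CommRing A] (I : Ideal A) : ℕ∞ :=
  ⨅ (p : PrimeSpectrum A) (_ : I ≤ p.asIdeal), Order.height p

/-- The minimal number of generators of an ideal. -/
noncomputable def minGens {A : Type*} [CommRing A] (I : Ideal A) : ℕ :=
  sInf {k : ℕ | ∃ g : Fin k → A, I = Ideal.span (Set.range g)}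

/-- The depth of a (Noetherian) ring along an ideal `P`: the supremum of lengths of
regular sequences contained in `P`. -/
noncomputable def depthAt {R : Type*} [CommRing R] (P : Ideal R) : ℕ∞ :=
  sSup {e : ℕ∞ | ∃ (k : ℕ) (g : Fin k → R), e = (k : ℕ∞) ∧ (∀ i, g i ∈ P) ∧ IsRegSeq g}

/-- A commutative ring is Cohen–Macaulay if for every maximal ideal the depth along it
equals its height. -/
def IsCMRing (R : Type*) [CommRing R] : Prop :=
  ∀ P : Ideal R, P.IsMaximal → depthAt P = idealHeight P

section ExtLemmas
open CategoryTheory CategoryTheory.Abelian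

variable {S : Type} [CommRing S]

/-- Vanishing of `Ext^i(N,M)`. -/
def EV (S : Type) [CommRing S] (N M : Type) [AddCommGroup N] [Module S N] [AddCommGroup M] [Module S M]
    (i : ℕ) : Prop := Subsingleton (Ext (ModuleCat.of S N) (ModuleCat.of S M) i)

variable {M M' M'' N N' N'' : Type} [AddCommGroup M] [Module S M] [AddCommGroup M'] [Module S M']
  [AddCommGroup M''] [Module S M''] [AddCommGroup N] [Module S N] [AddCommGroup N'] [Module S N']
  [AddCommGroup N''] [Module S N'']

/-- the short complex of linear maps -/
noncomputable def mkSC (f : M' →ₗ[S] M) (g : M →ₗ[S] M'') (hfg : Function.Exact f g) :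
    ShortComplex (ModuleCat S) :=
  ShortComplex.mk (ModuleCat.ofHom f) (ModuleCat.ofHom g) (by
    ext x; exact hfg.apply_apply_eq_zero x)

lemma mkSC_se (f : M' →ₗ[S] M) (g : M →ₗ[S] M'') (hfg : Function.Exact f g)
    (hf : Function.Injective f) (hg : Function.Surjective g) : (mkSC f g hfg).ShortExact :=
  ModuleCat.shortComplex_shortExact (mkSC f g hfg) hfg hf hg

lemma ev_left_succ (f : M' →ₗ[S] M) (g : M →ₗ[S] M'') (hfg : Function.Exact f g)
    (hf : Function.Injective f) (hg : Function.Surjective g) (i : ℕ)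
    (h1 : EV S N M (i + 1)) (h2 : EV S N M'' i) : EV S N M' (i + 1) := by
  have se := mkSC_se f g hfg hf hg
  refine ⟨fun a b => ?_⟩
  rw [← sub_eq_zero]
  obtain ⟨y, hy⟩ := Ext.covariant_sequence_exact₁ (ModuleCat.of S N) se (n₁ := i + 1) (a - b)
    (h1.elim _ _) rfl
  rw [← hy]
  have : y = 0 := h2.elim _ _
  rw [this]; simp
  rfl

lemma ev_left_zero (f : M' →ₗ[S] M) (hf : Function.Injective f)
    (h1 : EV S N M 0) : EV S N M' 0 := by
  have : Mono (ModuleCat.ofHom f) := (ModuleCat.mono_iff_injective _).2 hf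
  have := Ext.postcomp_mk₀_injective_of_mono (ModuleCat.of S N) (ModuleCat.ofHom f)
  exact ⟨fun a b => this (h1.elim _ _)⟩

lemma ev_mid (f : M' →ₗ[S] M) (g : M →ₗ[S] M'') (hfg : Function.Exact f g)
    (hf : Function.Injective f) (hg : Function.Surjective g) (i : ℕ)
    (h1 : EV S N M' i) (h2 : EV S N M'' i) : EV S N M i := by
  have se := mkSC_se f g hfg hf hg
  refine ⟨fun a b => ?_⟩
  rw [← sub_eq_zero]
  obtain ⟨y, hy⟩ := Ext.covariant_sequence_exact₂ (ModuleCat.of S N) se (n := i) (a - b)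
    (h2.elim _ _)
  rw [← hy]
  have : y = 0 := h1.elim _ _
  rw [this]; simp
  rfl

lemma ev_right (f : M' →ₗ[S] M) (g : M →ₗ[S] M'') (hfg : Function.Exact f g)
    (hf : Function.Injective f) (hg : Function.Surjective g) (i : ℕ)
    (h1 : EV S N M i) (h2 : EV S N M' (i + 1)) : EV S N M'' i := by
  have se := mkSC_se f g hfg hf hg
  refine ⟨fun a b => ?_⟩
  rw [← sub_eq_zero]
  obtain ⟨y, hy⟩ := Ext.covariant_sequence_exact₃ (ModuleCat.of S N) se (n₀ := i) (a - b) rfl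
    (h2.elim _ _)
  rw [← hy]
  have : y = 0 := h1.elim _ _
  rw [this]; simp
  rfl

lemma ev_contra (f : N' →ₗ[S] N) (g : N →ₗ[S] N'') (hfg : Function.Exact f g)
    (hf : Function.Injective f) (hg : Function.Surjective g) (i : ℕ)
    (h1 : EV S N' M i) (h2 : EV S N'' M i) : EV S N M i := by
  have se := mkSC_se f g hfg hf hg
  refine ⟨fun a b => ?_⟩
  rw [← sub_eq_zero]
  obtain ⟨y, hy⟩ := Ext.contravariant_sequence_exact₂ se (ModuleCat.of S M) (n := i) (a - b)
    (h1.elim _ _)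
  rw [← hy]
  have : y = 0 := h2.elim _ _
  rw [this]; simp
  rfl

lemma ev_congr_left (e : N ≃ₗ[S] N') (i : ℕ) (h : EV S N M i) : EV S N' M i := by
  have se := mkSC_se (M'' := PUnit) e.toLinearMap (0 : N' →ₗ[S] PUnit)
    (fun y => ⟨fun _ => ⟨e.symm y, by simp⟩, fun _ => rfl⟩) e.injective (fun _ => ⟨0, rfl⟩)
  have : Epi (ModuleCat.ofHom e.toLinearMap) := (ModuleCat.epi_iff_surjective _).2 e.surjective
  refine ⟨fun a b => ?_⟩
  have key : (Ext.mk₀ (ModuleCat.ofHom e.toLinearMap)).comp a (zero_add i) =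
    (Ext.mk₀ (ModuleCat.ofHom e.toLinearMap)).comp b (zero_add i) := h.elim _ _
  have := congrArg (fun z => (Ext.mk₀ (ModuleCat.ofHom e.symm.toLinearMap)).comp z (zero_add i)) key
  have hid : ModuleCat.ofHom e.symm.toLinearMap ≫ ModuleCat.ofHom e.toLinearMap
    = 𝟙 (ModuleCat.of S N') := by ext; simp
  simpa only [Ext.mk₀_comp_mk₀_assoc, hid, Ext.mk₀_id_comp] using this

lemma ev_congr_right (e : M ≃ₗ[S] M') (i : ℕ) (h : EV S N M i) : EV S N M' i := by
  refine ev_mid (M' := M) (M := M') (M'' := PUnit) e.toLinearMap (0 : M' →ₗ[S] PUnit)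
    (fun y => ⟨fun _ => ⟨e.symm y, by simp⟩, fun _ => rfl⟩) e.injective (fun _ => ⟨0, rfl⟩) i h ?_
  refine ⟨fun a b => ?_⟩
  have hz : (𝟙 (ModuleCat.of S PUnit)) = 0 := by ext
  rw [← Ext.comp_mk₀_id a, ← Ext.comp_mk₀_id b, hz]; simp

lemma ev_of_subsingleton [Subsingleton M] (i : ℕ) : EV S N M i := by
  refine ⟨fun a b => ?_⟩
  have hz : (𝟙 (ModuleCat.of S M)) = 0 := by ext x; exact Subsingleton.elim (α := M) _ _
  rw [← Ext.comp_mk₀_id a, ← Ext.comp_mk₀_id b, hz]; simp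

lemma ev_of_subsingleton_left [Subsingleton N] (i : ℕ) : EV S N M i := by
  refine ⟨fun a b => ?_⟩
  have hz : (𝟙 (ModuleCat.of S N)) = 0 := by ext x; exact Subsingleton.elim (α := N) _ _
  rw [← Ext.mk₀_id_comp a, ← Ext.mk₀_id_comp b, hz]; simp

lemma ext_smul_left (x : S) (hx : ∀ y : N, x • y = 0) (i : ℕ)
    (a : Ext (ModuleCat.of S N) (ModuleCat.of S M) i) : x • a = 0 := by
  have hz : x • (𝟙 (ModuleCat.of S N)) = 0 := by ext y; exact hx y
  have : x • a = (Ext.mk₀ (x • 𝟙 (ModuleCat.of S N))).comp a (zero_add i) := by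
    simp [Ext.mk₀_smul]
  rw [this, hz]; simp

lemma ext_smul_right (x : S) (hx : ∀ y : M, x • y = 0) (i : ℕ)
    (a : Ext (ModuleCat.of S N) (ModuleCat.of S M) i) : x • a = 0 := by
  have hz : x • (𝟙 (ModuleCat.of S M)) = 0 := by ext y; exact hx y
  have : x • a = a.comp (Ext.mk₀ (x • 𝟙 (ModuleCat.of S M))) (add_zero i) := by
    simp [Ext.mk₀_smul]
  rw [this, hz]; simp

lemma ev_reg_zero (x : S) (hx : ∀ y : N, x • y = 0) (hr : IsSMulRegular M x) : EV S N M 0 := by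
  have : Subsingleton (N →ₗ[S] M) := ⟨fun f g => by
    ext y; apply hr; simp only [← map_smul, hx, map_zero]⟩
  exact (Ext.addEquiv₀.trans ModuleCat.homAddEquiv).subsingleton

lemma ev_reg_succ (x : S) (hx : ∀ y : N, x • y = 0) (hr : IsSMulRegular M x) (i : ℕ)
    (h : EV S N (QuotSMulTop x M) i) : EV S N M (i + 1) := by
  have se := IsSMulRegular.smulShortComplex_shortExact (M := ModuleCat.of S M) hr
  refine ⟨fun a b => ?_⟩
  rw [← sub_eq_zero]
  obtain ⟨y, hy⟩ := Ext.covariant_sequence_exact₁ (ModuleCat.of S N) se (n₁ := i + 1) (a - b)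
    (by
      have : x • (a - b) = (a-b).comp (Ext.mk₀ (x • 𝟙 (ModuleCat.of S M))) (add_zero _) := by
        simp [Ext.mk₀_smul]
      exact this.symm.trans (ext_smul_left x hx _ _)) rfl
  rw [← hy]
  have : y = 0 := h.elim _ _
  rw [this]; simp
  rfl

lemma ev_reg_quot (x : S) (hr : IsSMulRegular M x) (i : ℕ)
    (h : EV S N M i) (h' : EV S N M (i+1)) : EV S N (QuotSMulTop x M) i := by
  have se := IsSMulRegular.smulShortComplex_shortExact (M := ModuleCat.of S M) hr
  refine ⟨fun a b => ?_⟩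
  rw [← sub_eq_zero]
  obtain ⟨y, hy⟩ := Ext.covariant_sequence_exact₃ (ModuleCat.of S N) se (n₀ := i) (a - b) rfl
    (h'.elim _ _)
  rw [← hy]
  have : y = 0 := h.elim _ _
  rw [this]; simp
  rfl

lemma ext_divisible (x : S) (hr : IsSMulRegular N x) (i : ℕ)
    (h : EV S (QuotSMulTop x N) M (i + 1)) (a : Ext (ModuleCat.of S N) (ModuleCat.of S M) i) :
    ∃ b : Ext (ModuleCat.of S N) (ModuleCat.of S M) i, x • b = a := by
  have se := IsSMulRegular.smulShortComplex_shortExact (M := ModuleCat.of S N) hr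
  have h : Subsingleton (Ext (ModuleCat.of S (QuotSMulTop x N)) (ModuleCat.of S M) (i + 1)) := h
  obtain ⟨y, hy⟩ := Ext.contravariant_sequence_exact₁ se (ModuleCat.of S M) (n₀ := i) a (n₁ := i + 1)
    (add_comm _ _) (h.elim _ _)
  change Ext (ModuleCat.of S N) (ModuleCat.of S M) i at y
  refine ⟨y, ?_⟩
  have : x • y = (Ext.mk₀ (x • 𝟙 (ModuleCat.of S N))).comp y (zero_add i) := by
    simp [Ext.mk₀_smul]
  rw [this]; exact hy

lemma ev_of_divisible [IsNoetherianRing S] [Module.Finite S N] [Module.Finite S M] (i : ℕ)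
    (x : S) (h1 : ∀ a : Ext (ModuleCat.of S N) (ModuleCat.of S M) i, ∃ b, x • b = a)
    (h2 : ∀ y : S, ∀ a : Ext (ModuleCat.of S N) (ModuleCat.of S M) i, ∃ b, (1 - x * y) • b = a) :
    EV S N M i := by
  have hf : Module.Finite S (ModuleCat.of S N) := by assumption
  have hf : Module.Finite S (ModuleCat.of S M) := by assumption
  have fin : Module.Finite S (Ext (ModuleCat.of S N) (ModuleCat.of S M) i) :=
    ModuleCat.finite_ext _ _ _ _
  obtain ⟨r, hr, hr'⟩ := Submodule.exists_sub_one_mem_and_smul_eq_zero_of_fg_of_le_smul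
    (Ideal.span {x}) (⊤ : Submodule S (Ext (ModuleCat.of S N) (ModuleCat.of S M) i))
    fin.fg_top (by
      intro a _
      obtain ⟨b, rfl⟩ := h1 a
      exact Submodule.smul_mem_smul (Ideal.mem_span_singleton_self x) trivial)
  obtain ⟨y, hy⟩ := Ideal.mem_span_singleton'.1 hr
  have : ∀ a : Ext (ModuleCat.of S N) (ModuleCat.of S M) i, a = 0 := by
    intro a
    obtain ⟨b, rfl⟩ := h2 (-y) a
    have : 1 - x * -y = r := by linear_combination hy
    rw [this]
    exact hr' b trivial
  exact ⟨fun a b => by rw [this a, this b]⟩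

end ExtLemmas

section DepthLemmas
open RingTheory.Sequence

variable {S : Type} [CommRing S]
variable {M M' M'' N : Type} [AddCommGroup M] [Module S M] [AddCommGroup M'] [Module S M']
  [AddCommGroup M''] [Module S M''] [AddCommGroup N] [Module S N]

/-- depth of `M` along `P` is at least `d`. -/
def DP (P : Ideal S) (d : ℕ) (M : Type) [AddCommGroup M] [Module S M] : Prop :=
  ∀ i < d, EV S (S ⧸ P) M i

lemma quot_kill {P : Ideal S} {x : S} (hx : x ∈ P) (y : S ⧸ P) : x • y = 0 := by
  obtain ⟨y, rfl⟩ := Ideal.Quotient.mk_surjective y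
  rw [Algebra.smul_def, Ideal.Quotient.algebraMap_eq, Ideal.Quotient.eq_zero_iff_mem.2 hx, zero_mul]

lemma DP.mono {P : Ideal S} {d e : ℕ} (h : DP P d M) (he : e ≤ d) : DP P e M :=
  fun i hi => h i (hi.trans_le he)

lemma DP.left {P : Ideal S} {d d' : ℕ} (f : M' →ₗ[S] M) (g : M →ₗ[S] M'')
    (hfg : Function.Exact f g)
    (hf : Function.Injective f) (hg : Function.Surjective g) (h : DP P d M) (h' : DP P d' M'')
    (hd : d ≤ d' + 1) : DP P d M' := by
  rintro (_ | i) hi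
  · exact ev_left_zero f hf (h 0 hi)
  · exact ev_left_succ f g hfg hf hg i (h _ hi) (h' _ (by omega))

lemma DP.right {P : Ideal S} {d : ℕ} (f : M' →ₗ[S] M) (g : M →ₗ[S] M'')
    (hfg : Function.Exact f g)
    (hf : Function.Injective f) (hg : Function.Surjective g) (h : DP P d M)
    (h' : DP P (d + 1) M') : DP P d M'' :=
  fun i hi => ev_right f g hfg hf hg i (h _ hi) (h' _ (by omega))

lemma DP.congr {P : Ideal S} {d : ℕ} (e : M ≃ₗ[S] M') (h : DP P d M) : DP P d M' :=
  fun i hi => ev_congr_right e i (h i hi)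

lemma DP.of_list {P : Ideal S} {rs : List S} (hP : ∀ r ∈ rs, r ∈ P) (h : IsWeaklyRegular M rs) :
    DP P rs.length M := by
  induction rs generalizing M with
  | nil => intro i hi; simp at hi
  | cons r rs ih =>
    rw [isWeaklyRegular_cons_iff] at h
    have hr : ∀ y : S ⧸ P, r • y = 0 := quot_kill (hP r (by simp))
    rintro (_ | i) hi
    · exact ev_reg_zero r hr h.1
    · exact ev_reg_succ r hr h.1 i (ih (fun x hx => hP x (by simp [hx])) h.2 i (by simpa using hi))

lemma DP.exists_list [IsNoetherianRing S] [Module.Finite S M] {P : Ideal S} {d : ℕ}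
    (h : DP P d M) : ∃ rs : List S, rs.length = d ∧ (∀ r ∈ rs, r ∈ P) ∧ IsWeaklyRegular M rs := by
  induction d generalizing M with
  | zero => exact ⟨[], rfl, by simp, by simp⟩
  | succ d ih =>
    have h0 : Subsingleton ((S ⧸ P) →ₗ[S] M) := by
      have := h 0 (by omega)
      exact (CategoryTheory.Abelian.Ext.addEquiv₀.trans ModuleCat.homAddEquiv :
        CategoryTheory.Abelian.Ext (ModuleCat.of S (S ⧸ P)) (ModuleCat.of S M) 0 ≃+ _).symm.toEquiv.subsingleton_congr.2 this
    obtain ⟨r, hr, hreg⟩ := IsSMulRegular.subsingleton_linearMap_iff.1 h0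
    rw [Ideal.annihilator_quotient] at hr
    obtain ⟨rs, h1, h2, h3⟩ := ih (M := QuotSMulTop r M)
      (fun i hi => ev_reg_quot r hreg i (h i (by omega)) (h (i+1) (by omega)))
    refine ⟨r :: rs, by simp [h1], ?_, h3.cons hreg⟩
    intro x hx
    rcases List.mem_cons.1 hx with rfl | hx
    · exact hr
    · exact h2 x hx

/-- every maximal ideal contains a weakly regular sequence of length `d`. -/
def GR (R : Type) [CommRing R] (d : ℕ) : Prop :=
  ∀ P : Ideal R, P.IsMaximal → ∃ rs : List R, rs.length = d ∧ (∀ r ∈ rs, r ∈ P) ∧ IsWeaklyRegular R rs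

lemma GR.congr {R R' : Type} [CommRing R] [CommRing R'] (e : R ≃+* R') {d : ℕ} (h : GR R d) :
    GR R' d := by
  intro P hP
  obtain ⟨rs, h1, h2, h3⟩ := h (P.comap e.toRingHom)
    (Ideal.comap_isMaximal_of_surjective _ e.surjective)
  refine ⟨rs.map e, by simp [h1], ?_, ?_⟩
  · intro r hr
    obtain ⟨x, hx, rfl⟩ := List.mem_map.1 hr
    exact h2 x hx
  · refine (AddEquiv.isWeaklyRegular_congr (e := e.toAddEquiv) ?_).1 h3
    exact List.forall₂_map_right_iff.mpr <| List.forall₂_same.mpr fun r _ x => by simp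

lemma GR.of_dp {A : Type} [CommRing A] [Algebra S A] [IsNoetherianRing S]
    (hs : Function.Surjective (algebraMap S A)) {d : ℕ}
    (h : ∀ P : Ideal S, P.IsMaximal → DP P d A) : GR A d := by
  intro P hP
  have : Module.Finite S A := Module.Finite.of_surjective (Algebra.linearMap S A) hs
  obtain ⟨rs, h1, h2, h3⟩ := (h (P.comap (algebraMap S A))
    (Ideal.comap_isMaximal_of_surjective _ hs)).exists_list
  refine ⟨rs.map (algebraMap S A), by simp [h1], ?_, ?_⟩
  · intro r hr
    obtain ⟨x, hx, rfl⟩ := List.mem_map.1 hr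
    exact h2 x hx
  · exact (isWeaklyRegular_map_algebraMap_iff A A rs).2 h3

lemma GR.dp {A : Type} [CommRing A] [Algebra S A] 
    (hs : Function.Surjective (algebraMap S A)) {d : ℕ} (h : GR A d)
    (P : Ideal S) (hP : P.IsMaximal) : DP P d A := by
  by_cases hJ : RingHom.ker (algebraMap S A) ≤ P
  · have hc : (P.map (algebraMap S A)).comap (algebraMap S A) = P := by
      rw [Ideal.comap_map_of_surjective' _ hs, sup_eq_left.2 hJ]
    have hm : (P.map (algebraMap S A)).IsMaximal :=
      (Ideal.map_eq_top_or_isMaximal_of_surjective _ hs hP).resolve_left (fun ht => by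
        rw [ht, Ideal.comap_top] at hc; exact hP.ne_top hc.symm)
    obtain ⟨rs, h1, h2, h3⟩ := h _ hm
    obtain ⟨rs, rfl⟩ : ∃ rs' : List S, rs'.map (algebraMap S A) = rs := 
      ⟨rs.map (Function.surjInv hs), by
        rw [List.map_map]; convert List.map_id _; ext x; simp [Function.surjInv_eq]⟩
    rw [← h1, List.length_map]
    refine DP.of_list ?_ ((isWeaklyRegular_map_algebraMap_iff A A rs).1 h3)
    intro r hr
    rw [← hc]; exact h2 _ (List.mem_map_of_mem hr)
  · obtain ⟨x, hx, hxP⟩ := Set.not_subset.1 hJ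
    obtain ⟨y, hy⟩ := hP.exists_inv (x := x) hxP
    obtain ⟨i, hi, hyi⟩ := hy
    intro j _
    have : ∀ a : CategoryTheory.Abelian.Ext (ModuleCat.of S (S ⧸ P)) (ModuleCat.of S A) j, a = 0 := by
      intro a
      have e1 : i • a = 0 := ext_smul_left i (fun z => quot_kill hi z) j a
      have e2 : x • a = 0 := ext_smul_right x (fun z => by
        rw [Algebra.smul_def, (RingHom.mem_ker).1 hx, zero_mul]) j a
      have : (y * x + i) • a = 0 := by rw [add_smul, mul_smul, e1, e2]; simp
      rwa [hyi, one_smul] at this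
    exact ⟨fun a b => by rw [this a, this b]⟩

lemma DP.of_flat (P : Ideal S) (hP : P.IsMaximal) {d : ℕ} (h : GR S d) [Module.Flat S M] :
    DP P d M := by
  obtain ⟨rs, h1, h2, h3⟩ := h P hP
  rw [← h1]
  refine DP.of_list h2 ?_
  exact (LinearEquiv.isWeaklyRegular_congr (TensorProduct.rid S M) rs).1 h3.isWeaklyRegular_lTensor

lemma ischebeck [IsNoetherianRing S] [Module.Finite S M] {d : ℕ}
    (h : ∀ P : Ideal S, P.IsMaximal → DP P d M) (q : PrimeSpectrum S) (i : ℕ) 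
    (hi : ¬ EV S (S ⧸ q.asIdeal) M i) : (d : ℕ∞) ≤ i + Order.coheight q := by
  have wf : WellFounded (fun a b : PrimeSpectrum S => a > b) := 
    InvImage.wf (r := (· > ·)) (f := PrimeSpectrum.asIdeal) (IsWellFounded.wf)
  induction q using wf.induction generalizing i with
  | _ q ih =>
  by_contra hlt
  push Not at hlt
  apply hi
  by_cases hm : q.asIdeal.IsMaximal
  · refine h _ hm i ?_
    have : (i : ℕ∞) < d := lt_of_le_of_lt (by simp) hlt
    exact_mod_cast this
  obtain ⟨P, hP, hqP⟩ := Ideal.exists_le_maximal q.asIdeal q.2.ne_top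
  have hne : ¬ P ≤ q.asIdeal := fun hle => hm (by rwa [le_antisymm hqP hle])
  obtain ⟨x, hxP, hxq⟩ := Set.not_subset.1 hne
  have key : ∀ x : S, x ∉ q.asIdeal → ∀ a : CategoryTheory.Abelian.Ext (ModuleCat.of S (S ⧸ q.asIdeal))
      (ModuleCat.of S M) i, ∃ b, x • b = a := by
    intro x hx
    apply ext_divisible
    · intro a b hab
      obtain ⟨a, rfl⟩ := Ideal.Quotient.mk_surjective a
      obtain ⟨b, rfl⟩ := Ideal.Quotient.mk_surjective b
      simp only [Algebra.smul_def, Ideal.Quotient.algebraMap_eq, ← map_mul] at hab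
      rw [Ideal.Quotient.eq] at hab ⊢
      rw [← mul_sub] at hab
      exact (q.2.mem_or_mem hab).resolve_left hx
    · have hkill : ∀ r : S, (r ∈ q.asIdeal ∨ r = x) → ∀ y : QuotSMulTop x (S ⧸ q.asIdeal), r • y = 0 := by
        intro r hr y
        obtain ⟨y, rfl⟩ := Submodule.Quotient.mk_surjective _ y
        rcases hr with hr | rfl
        · rw [← Submodule.Quotient.mk_smul, quot_kill hr]; simp
        · rw [← Submodule.Quotient.mk_smul, Submodule.Quotient.mk_eq_zero]
          exact Submodule.smul_mem_pointwise_smul _ _ _ trivial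
      revert hkill
      refine IsNoetherianRing.induction_on_isQuotientEquivQuotientPrime S (M := QuotSMulTop x (S ⧸ q.asIdeal))
        (motive := fun N _ _ _ => (∀ r : S, (r ∈ q.asIdeal ∨ r = x) → ∀ y : N, r • y = 0) →
          EV S N M (i + 1)) inferInstance ?_ ?_ ?_
      · intro N _ _ _ _ _
        exact ev_of_subsingleton_left _
      · intro N _ _ _ p e hk
        have hmem : ∀ r : S, (r ∈ q.asIdeal ∨ r = x) → r ∈ p.asIdeal := by
          intro r hr
          have := hk r hr (e.symm 1)
          rw [← map_smul, e.symm.map_eq_zero_iff, Algebra.smul_def, mul_one] at this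
          exact Ideal.Quotient.eq_zero_iff_mem.1 this
        have hlt' : q < p := by
          refine lt_of_le_of_ne (fun r hr => hmem r (Or.inl hr)) ?_
          rintro rfl
          exact hx (hmem x (Or.inr rfl))
        refine ev_congr_left e.symm _ ?_
        by_contra hne
        have h1 := ih p hlt' (i+1) hne
        have h2 := Order.coheight_add_one_le hlt'
        have : (d : ℕ∞) ≤ i + Order.coheight q := by
          refine h1.trans ?_
          push_cast
          rw [add_assoc, add_comm 1]
          gcongr
        exact absurd hlt this.not_gt
      · intro N1 _ _ _ N2 _ _ _ N3 _ _ _ f g hf hg hfg h1 h3 hk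
        refine ev_contra f g hfg hf hg _ (h1 ?_) (h3 ?_)
        · intro r hr y
          apply hf; rw [map_smul, hk r hr, map_zero]
        · intro r hr y
          obtain ⟨y, rfl⟩ := hg y
          rw [← map_smul, hk r hr, map_zero]
  refine ev_of_divisible i x (key x hxq) (fun y => key _ (fun hy => ?_))
  apply hP.ne_top
  rw [Ideal.eq_top_iff_one]
  have := P.add_mem (hqP hy) (P.mul_mem_right y hxP)
  simpa using this

lemma ass_coheight [IsNoetherianRing S] [Module.Finite S M] {d : ℕ}
    (h : ∀ P : Ideal S, P.IsMaximal → DP P d M) (q : PrimeSpectrum S) 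
    (hq : q.asIdeal ∈ associatedPrimes S M) : (d : ℕ∞) ≤ Order.coheight q := by
  have := ischebeck h q 0 ?_
  · simpa using this
  intro hev
  have h0 : Subsingleton ((S ⧸ q.asIdeal) →ₗ[S] M) := 
      (CategoryTheory.Abelian.Ext.addEquiv₀.trans ModuleCat.homAddEquiv :
        CategoryTheory.Abelian.Ext (ModuleCat.of S (S ⧸ q.asIdeal)) (ModuleCat.of S M) 0 ≃+ _).symm.toEquiv.subsingleton_congr.2 hev
  obtain ⟨r, hr, hreg⟩ := IsSMulRegular.subsingleton_linearMap_iff.1 h0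
  rw [Ideal.annihilator_quotient] at hr
  have : r ∈ {r : S | IsSMulRegular M r}ᶜ := by
    rw [← biUnion_associatedPrimes_eq_compl_regular]
    exact Set.mem_biUnion hq hr
  exact this hreg

end DepthLemmas

section PolyLemmas
open scoped Pointwise
open RingTheory.Sequence

lemma GR.poly {R : Type} [CommRing R] [IsJacobsonRing R] {d : ℕ} (h : GR R d) :
    GR (Polynomial R) (d + 1) := by
  intro P hP
  have hm := Polynomial.isMaximal_comap_C_of_isJacobsonRing P (hP := hP)
  obtain ⟨rs, h1, h2, h3⟩ := h _ hm
  obtain ⟨p, hp, hp'⟩ := Polynomial.quotient_mk_comp_C_isIntegral_of_isJacobsonRing P (Ideal.Quotient.mk P Polynomial.X)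
  have hpP : p ∈ P := by
    rw [← Polynomial.hom_eval₂, Polynomial.eval₂_C_X] at hp'
    exact Ideal.Quotient.eq_zero_iff_mem.1 hp'
  refine ⟨p :: rs.map (algebraMap R (Polynomial R)), by simp [h1], ?_, ?_⟩
  · intro r hr
    rcases List.mem_cons.1 hr with rfl | hr
    · exact hpP
    · obtain ⟨x, hx, rfl⟩ := List.mem_map.1 hr
      exact h2 x hx
  · rw [isWeaklyRegular_cons_iff]
    constructor
    · intro a b hab
      exact hp.isRegular.left hab
    · rw [isWeaklyRegular_map_algebraMap_iff]
      have heq : (p • ⊤ : Submodule (Polynomial R) (Polynomial R)) = Ideal.span {p} := by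
        rw [Submodule.ideal_span_singleton_smul p ⊤ |>.symm]; simp
      let e : QuotSMulTop p (Polynomial R) ≃ₗ[R] AdjoinRoot p :=
        (Submodule.quotEquivOfEq _ _ heq).restrictScalars R
      have : Module.Free R (AdjoinRoot p) := hp.free_adjoinRoot
      have : Module.Flat R (QuotSMulTop p (Polynomial R)) := Module.Flat.of_linearEquiv e
      exact (LinearEquiv.isWeaklyRegular_congr (TensorProduct.rid R _) rs).1 h3.isWeaklyRegular_lTensor

lemma GR.field (K : Type) [Field K] : GR K 0 := fun _ _ => ⟨[], rfl, by simp, by simp⟩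

lemma GR.mvPoly (K : Type) [Field K] (m : ℕ) : GR (MvPolynomial (Fin m) K) m := by
  induction m with
  | zero => exact (GR.field K).congr (MvPolynomial.isEmptyRingEquiv K (Fin 0)).symm
  | succ m ih => exact ih.poly.congr (MvPolynomial.finSuccEquiv K m).symm.toRingEquiv

end PolyLemmas


lemma freeRes_dp {S : Type} [CommRing S] {M : Type} [AddCommGroup M] [Module S M] {m k : ℕ}
    (h : GR S m) (R : FreeRes S M) (hk : ∀ i : ℕ, k < i → IsEmpty (R.ι i)) (hkm : k ≤ m)
    (P : Ideal S) (hP : P.IsMaximal) : DP P (m - k) M := by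
  have claim : ∀ j i e : ℕ, k ≤ i + j → e + j ≤ m + 1 → DP P e (LinearMap.range (R.d i)) := by
    intro j
    induction j with
    | zero =>
      intro i e hi _
      have := hk (i+1) (by omega)
      have : Subsingleton (LinearMap.range (R.d i)) := by
        refine ⟨?_⟩
        rintro ⟨_, a, rfl⟩ ⟨_, b, rfl⟩
        congr 2
        exact Subsingleton.elim a b
      exact fun _ _ => ev_of_subsingleton _
    | succ j ih =>
      intro i e hi he
      refine DP.right (Submodule.subtype (LinearMap.range (R.d (i+1)))) (LinearMap.rangeRestrict (R.d i))
        ?_ (Submodule.injective_subtype _) (LinearMap.surjective_rangeRestrict _)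
        ((DP.of_flat P hP h).mono (by omega)) (ih (i+1) (e+1) (by omega) (by omega))
      intro x
      rw [← Subtype.coe_inj]
      refine (R.exact_d i x).trans ?_
      simp
  refine DP.right (Submodule.subtype (LinearMap.range (R.d 0))) R.ε
        ?_ (Submodule.injective_subtype _) R.surj
        ((DP.of_flat P hP h).mono (by omega)) (claim k 0 (m-k+1) (by omega) (by omega))
  intro x
  refine (R.exact_ε x).trans ?_
  simp

lemma projDim_dp {S : Type} [CommRing S] {M : Type} [AddCommGroup M] [Module S M] {m n : ℕ}
    (h : GR S m) (hpd : projDim S M = (n : ℕ∞)) (hn : n ≤ m)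
    (P : Ideal S) (hP : P.IsMaximal) : DP P (m - n) M := by
  have hne : {e : ℕ∞ | ∃ k : ℕ, e = (k : ℕ∞) ∧
    ∃ R : FreeRes S M, ∀ i : ℕ, k < i → IsEmpty (R.ι i)}.Nonempty := by
    by_contra hc
    rw [Set.not_nonempty_iff_eq_empty] at hc
    rw [projDim, hc, sInf_empty] at hpd
    exact ENat.top_ne_natCast n hpd
  have hmem := csInf_mem hne
  obtain ⟨k, hk, R, hR⟩ := hmem
  have : k = n := by
    have := hk.symm.trans hpd
    exact_mod_cast this
  subst this
  exact freeRes_dp h R hR hn P hP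


lemma coset_avoid {B : Type} [CommRing B] (s : Finset (Ideal B)) (hs : ∀ p ∈ s, p.IsPrime) (x : B)
    (J : Ideal B) (h : ∀ p ∈ s, x ∈ p → ¬ J ≤ p) : ∃ c ∈ J, ∀ p ∈ s, x + c ∉ p := by
  classical
  induction s using Finset.strongInduction with
  | H s ih =>
  rcases s.eq_empty_or_nonempty with rfl | hne
  · exact ⟨0, J.zero_mem, by simp⟩
  obtain ⟨p0, hp0⟩ := s.exists_minimal hne
  obtain ⟨c, hcJ, hc⟩ := ih (s.erase p0) (Finset.erase_ssubset hp0.1)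
    (fun p hp => hs p (Finset.mem_of_mem_erase hp)) (fun p hp => h p (Finset.mem_of_mem_erase hp))
  by_cases hx : x + c ∈ p0
  · have hJ : ¬ J ≤ p0 := by
      intro hle
      refine h p0 hp0.1 ?_ hle
      simpa using p0.sub_mem hx (hle hcJ)
    have hp0p := hs p0 hp0.1
    have : ¬ J * (∏ p ∈ s.erase p0, p) ≤ p0 := by
      rw [hp0p.mul_le, hp0p.prod_le]
      rintro (h1 | ⟨p, hp, hle⟩)
      · exact hJ h1
      · have := hp0.2 (Finset.mem_of_mem_erase hp) hle
        exact Finset.ne_of_mem_erase hp (le_antisymm hle this)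
    obtain ⟨d, hd, hd0⟩ := Set.not_subset.1 this
    have hd1 : d ∈ J := (Ideal.mul_le_left : J * (∏ p ∈ s.erase p0, p) ≤ J) hd
    have hd2 : d ∈ (∏ p ∈ s.erase p0, p) := (Ideal.mul_le_right : J * (∏ p ∈ s.erase p0, p) ≤ _) hd
    refine ⟨c + d, J.add_mem hcJ hd1, ?_⟩
    intro p hp hmem
    by_cases hpp : p = p0
    · subst hpp
      exact hd0 (by simpa [← add_assoc] using p.sub_mem hmem hx)
    · have hpe : p ∈ s.erase p0 := Finset.mem_erase.2 ⟨hpp, hp⟩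
      have hdp : d ∈ p := by
        have h1 : (∏ p ∈ s.erase p0, p) ≤ p := Ideal.prod_le_inf.trans (Finset.inf_le (f := fun p => p) hpe)
        exact h1 hd2
      exact hc p hpe (by simpa [← add_assoc] using p.sub_mem hmem hdp)
  · refine ⟨c, hcJ, fun p hp => ?_⟩
    by_cases hpp : p = p0
    · rwa [hpp]
    · exact hc p (Finset.mem_erase.2 ⟨hpp, hp⟩)

/-- the ideal generated by the first `i` elements -/
def aI {B : Type} [CommRing B] (a : ℕ → B) (i : ℕ) : Ideal B := Ideal.span (a '' {j | j < i})

lemma aI_succ {B : Type} [CommRing B] (a : ℕ → B) (i : ℕ) : aI a (i+1) = aI a i ⊔ Ideal.span {a i} := by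
  rw [aI, aI, ← Ideal.span_union]
  congr 1
  ext x
  simp only [Set.mem_image, Set.mem_ofPred_eq, Set.mem_union, Set.mem_singleton_iff]
  constructor
  · rintro ⟨j, hj, rfl⟩
    rcases Nat.lt_succ_iff_lt_or_eq.1 hj with h | rfl
    · exact Or.inl ⟨j, h, rfl⟩
    · exact Or.inr rfl
  · rintro (⟨j, hj, rfl⟩ | rfl)
    · exact ⟨j, by omega, rfl⟩
    · exact ⟨i, by omega, rfl⟩

lemma aI_mem {B : Type} [CommRing B] (a : ℕ → B) {i j : ℕ} (h : j < i) : a j ∈ aI a i :=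
  Ideal.subset_span ⟨j, h, rfl⟩

/-- link exact sequence, depth of `B/L` -/
lemma link_left {B : Type} [CommRing B] (P J L J' : Ideal B) (b : B) (hL : ∀ x, x ∈ L ↔ x * b ∈ J)
    (hJ' : J' = J ⊔ Ideal.span {b}) :
    (∀ {d d' : ℕ}, DP P d (B ⧸ J) → DP P d' (B ⧸ J') → d ≤ d' + 1 → DP P d (B ⧸ L)) ∧
    (∀ {d : ℕ}, DP P d (B ⧸ J) → DP P (d + 1) (B ⧸ L) → DP P d (B ⧸ J')) := by
  let f : (B ⧸ L) →ₗ[B] (B ⧸ J) := Submodule.mapQ L J (LinearMap.mulRight B b) (fun x hx => (hL x).1 hx)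
  have hfa : ∀ x : B, f (Submodule.Quotient.mk x) = Submodule.Quotient.mk (x * b) := fun _ => rfl
  have hle : J ≤ J' := by rw [hJ']; exact le_sup_left
  let g : (B ⧸ J) →ₗ[B] (B ⧸ J') := Submodule.factor hle
  have hf : Function.Injective f := by
    rw [← LinearMap.ker_eq_bot, LinearMap.ker_eq_bot']
    intro x hx
    obtain ⟨x, rfl⟩ := Submodule.Quotient.mk_surjective _ x
    rw [hfa, Submodule.Quotient.mk_eq_zero] at hx
    rw [Submodule.Quotient.mk_eq_zero]
    exact (hL x).2 hx
  have hg : Function.Surjective g := Submodule.factor_surjective hle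
  have hfg : Function.Exact f g := by
    intro y
    obtain ⟨y, rfl⟩ := Submodule.Quotient.mk_surjective _ y
    have e1 : g (Submodule.Quotient.mk y) = Submodule.Quotient.mk y := rfl
    rw [e1, Submodule.Quotient.mk_eq_zero, hJ']
    constructor
    · intro h
      obtain ⟨u, hu, v, hv, rfl⟩ := Submodule.mem_sup.1 h
      obtain ⟨c, rfl⟩ := Ideal.mem_span_singleton'.1 hv
      refine ⟨Submodule.Quotient.mk c, ?_⟩
      rw [hfa, Submodule.Quotient.eq]
      simpa using hu
    · rintro ⟨x, hx⟩
      obtain ⟨x, rfl⟩ := Submodule.Quotient.mk_surjective _ x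
      rw [hfa, Submodule.Quotient.eq] at hx
      have h1 : x * b ∈ J ⊔ Ideal.span {b} := 
        Ideal.mem_sup_right (Ideal.mul_mem_left _ _ (Ideal.mem_span_singleton_self b))
      have h2 := Ideal.sub_mem _ h1 (Ideal.mem_sup_left (T := Ideal.span {b}) hx)
      simpa using h2
  exact ⟨fun h h' hd => DP.left f g hfg hf hg h h' hd, fun h h' => DP.right f g hfg hf hg h h'⟩

lemma aI_dp {B : Type} [CommRing B] {m n : ℕ} (hG : GR B m) (hn : n ≤ m) (a : ℕ → B)
    (ha : ∀ i < n, ∀ c, c * a i ∈ aI a i → c ∈ aI a i) (P : Ideal B) (hP : P.IsMaximal) :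
    DP P (m - n) (B ⧸ aI a n) := by
  induction n with
  | zero =>
    have : aI a 0 = ⊥ := by simp [aI]
    refine DP.congr ((Submodule.quotEquivOfEqBot _ this).symm) (DP.of_flat P hP hG)
  | succ n ih =>
    have h := ih (by omega) (fun i hi => ha i (by omega))
    refine (link_left P (aI a n) (aI a n) _ (a n) ?_ (aI_succ a n)).2 (h.mono (by omega)) ?_
    · exact fun x => ⟨fun hx => Ideal.mul_mem_right _ _ hx, ha n (by omega) x⟩
    · convert h using 1; omega

lemma selection {B : Type} [CommRing B] [IsNoetherianRing B] {m n : ℕ} (hG : GR B m) (hn : n ≤ m)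
    (hdim : ringKrullDim B ≤ m) (I : Ideal B) (hI : (n : ℕ∞) ≤ idealHeight I)
    (g0 : ℕ → B) (hg0 : aI g0 (n + 1) = I) (k : ℕ) (hk : k ≤ n) :
    ∃ g : ℕ → B, aI g (n + 1) = I ∧ ∀ i < k, ∀ c, c * g i ∈ aI g i → c ∈ aI g i := by
  induction k with
  | zero => exact ⟨g0, hg0, by simp⟩
  | succ k ih =>
    obtain ⟨g, hg, hreg⟩ := ih (by omega)
    have hfin := associatedPrimes.finite B (B ⧸ aI g k)
    let J := Ideal.span (g '' {j | k < j ∧ j < n + 1})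
    have hdp := aI_dp hG (n := k) (by omega) g hreg
    obtain ⟨c, hcJ, hc⟩ := coset_avoid hfin.toFinset
      (fun p hp => IsAssociatedPrime.isPrime ((hfin.mem_toFinset).1 hp)) (g k) J (by
        intro p hp hgk hJ
        rw [hfin.mem_toFinset] at hp
        have hpp : p.IsPrime := IsAssociatedPrime.isPrime hp
        have hap : aI g k ≤ p := by
          have := hp.annihilator_le
          rwa [Submodule.annihilator_top, Ideal.annihilator_quotient] at this
        have hIp : I ≤ p := by
          rw [← hg, aI, Ideal.span_le]
          rintro _ ⟨j, hj, rfl⟩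
          rcases lt_trichotomy j k with h | rfl | h
          · exact hap (aI_mem g h)
          · exact hgk
          · exact hJ (Ideal.subset_span ⟨j, ⟨h, hj⟩, rfl⟩)
        have h1 := ass_coheight hdp ⟨p, hpp⟩ hp
        have h2 : (n : ℕ∞) ≤ Order.height (⟨p, hpp⟩ : PrimeSpectrum B) :=
          hI.trans (iInf₂_le (⟨p, hpp⟩ : PrimeSpectrum B) hIp)
        have h3 : ((Order.height (⟨p, hpp⟩ : PrimeSpectrum B) + Order.coheight (⟨p, hpp⟩ : PrimeSpectrum B) : ℕ∞) : WithBot ℕ∞)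
           ≤ Order.krullDim (PrimeSpectrum B) := by
          have : Nonempty (PrimeSpectrum B) := ⟨⟨p, hpp⟩⟩
          rw [Order.krullDim_eq_iSup_height_add_coheight_of_nonempty]
          exact WithBot.coe_le_coe.2 (le_iSup (fun a : PrimeSpectrum B => Order.height a + Order.coheight a) _)
        have h4 : (n : ℕ∞) + ((m - k : ℕ) : ℕ∞) ≤ m := by
          have := (WithBot.coe_le_coe.2 (add_le_add h2 h1)).trans (h3.trans hdim)
          exact WithBot.coe_le_coe.1 this
        have : n + (m - k) ≤ m := by exact_mod_cast h4
        omega)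
    have hlow : ∀ i ≤ k, aI (Function.update g k (g k + c)) i = aI g i := by
      intro i hi
      unfold aI
      congr 1
      refine Set.image_congr ?_
      intro j hj
      have : j < i := hj
      exact Function.update_of_ne (by omega) _ _
    refine ⟨Function.update g k (g k + c), ?_, ?_⟩
    · have hJmem : ∀ g' : ℕ → B, (∀ j, k < j → g' j = g j) → c ∈ aI g' (n+1) := by
        intro g' hg'
        have : J ≤ aI g' (n+1) := by
          rw [Ideal.span_le]
          rintro _ ⟨j, ⟨h1, h2⟩, rfl⟩
          rw [← hg' j h1]
          exact aI_mem g' h2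
        exact this hcJ
      rw [← hg]
      apply le_antisymm
      · rw [aI, Ideal.span_le]
        rintro _ ⟨j, hj, rfl⟩
        by_cases h : j = k
        · subst h; simp only [Function.update_self]
          exact Ideal.add_mem _ (aI_mem g hj) (hJmem g (fun _ _ => rfl))
        · rw [Function.update_of_ne h]; exact aI_mem g hj
      · rw [aI, Ideal.span_le]
        rintro _ ⟨j, hj, rfl⟩
        have hm := aI_mem (Function.update g k (g k + c)) hj
        by_cases h : j = k
        · subst h; simp only [Function.update_self] at hm
          simpa using Ideal.sub_mem _ hm (hJmem _ (fun i hi => Function.update_of_ne (by omega) _ _))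
        · rwa [Function.update_of_ne h] at hm
    · intro i hi d hd
      rw [hlow i (by omega)] at hd ⊢
      by_cases h : i = k
      · subst h
        simp only [Function.update_self] at hd
        have hr : IsSMulRegular (B ⧸ aI g i) (g i + c) := by
          by_contra hnr
          have : g i + c ∈ {r : B | IsSMulRegular (B ⧸ aI g i) r}ᶜ := hnr
          rw [← biUnion_associatedPrimes_eq_compl_regular] at this
          obtain ⟨p, hp, hm⟩ := Set.mem_iUnion₂.1 this
          exact hc p (hfin.mem_toFinset.2 hp) hm
        have : (Ideal.Quotient.mk (aI g i) d) = 0 := by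
          apply hr
          simp only [smul_zero]
          rw [Algebra.smul_def, Ideal.Quotient.algebraMap_eq, ← map_mul, Ideal.Quotient.eq_zero_iff_mem, mul_comm]
          exact hd
        exact Ideal.Quotient.eq_zero_iff_mem.1 this
      · rw [Function.update_of_ne h] at hd
        exact hreg i (by omega) d hd

section QIdeal
variable {A : Type} [CommRing A]

/-- the ideal `{y | s y ∈ (sX - c) Λ[X]}` -/
noncomputable def QI (Λ : Ideal A) (s c : A) : Ideal (Polynomial A) :=
  Submodule.comap (LinearMap.mulLeft (Polynomial A) (Polynomial.C s))
    (Submodule.map (LinearMap.mulLeft (Polynomial A) (Polynomial.C s * Polynomial.X - Polynomial.C c))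
      (Λ.map Polynomial.C))

lemma mem_QI {Λ : Ideal A} {s c : A} {y : Polynomial A} : y ∈ QI Λ s c ↔
    ∃ h ∈ Λ.map Polynomial.C, (Polynomial.C s * Polynomial.X - Polynomial.C c) * h = Polynomial.C s * y := by
  simp [QI, Submodule.mem_map]

lemma Cs_inj {s : A} (hs : ∀ x, s * x = 0 → x = 0) {x y : Polynomial A}
    (h : Polynomial.C s * x = Polynomial.C s * y) : x = y := by
  rw [← sub_eq_zero] at h ⊢
  ext k
  have := congrArg (fun p => Polynomial.coeff p k) h
  simp only [← mul_sub, Polynomial.coeff_C_mul, Polynomial.coeff_zero] at this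
  simpa using hs _ this

lemma coeff_e_mul_succ (s c : A) (h : Polynomial A) (k : ℕ) :
    ((Polynomial.C s * Polynomial.X - Polynomial.C c) * h).coeff (k + 1) = s * h.coeff k - c * h.coeff (k+1) := by
  rw [sub_mul, Polynomial.coeff_sub, mul_assoc, Polynomial.coeff_C_mul, Polynomial.coeff_C_mul,
    Polynomial.coeff_X_mul]

lemma coeff_e_mul_zero (s c : A) (h : Polynomial A) :
    ((Polynomial.C s * Polynomial.X - Polynomial.C c) * h).coeff 0 = - c * h.coeff 0 := by
  rw [sub_mul, Polynomial.coeff_sub, mul_assoc, Polynomial.coeff_C_mul, Polynomial.coeff_C_mul]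
  simp

lemma e_inj {s c : A} (hs : ∀ x, s * x = 0 → x = 0) {h : Polynomial A}
    (hh : (Polynomial.C s * Polynomial.X - Polynomial.C c) * h = 0) : h = 0 := by
  have := coeff_e_mul_succ s c h h.natDegree
  rw [hh, Polynomial.coeff_eq_zero_of_natDegree_lt (Nat.lt_succ_self _)] at this
  simp only [Polynomial.coeff_zero, mul_zero, sub_zero] at this
  have := hs _ this.symm
  rwa [Polynomial.coeff_natDegree, Polynomial.leadingCoeff_eq_zero] at this

lemma QI_cover {Λ Λ' : Ideal A} {s c : A} (hle : Λ ≤ Λ') (hcov : ∀ l ∈ Λ, ∃ t ∈ Λ', s * t = c * l) :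
    ∀ h ∈ Λ.map Polynomial.C, ∃ y ∈ Λ'.map Polynomial.C,
      (Polynomial.C s * Polynomial.X - Polynomial.C c) * h = Polynomial.C s * y := by
  intro h hh
  refine Submodule.span_induction (p := fun h _ => ∃ y ∈ Λ'.map Polynomial.C,
      (Polynomial.C s * Polynomial.X - Polynomial.C c) * h = Polynomial.C s * y) ?_ ?_ ?_ ?_ hh
  · rintro _ ⟨l, hl, rfl⟩
    obtain ⟨t, ht, hst⟩ := hcov l hl
    refine ⟨Polynomial.X * Polynomial.C l - Polynomial.C t, ?_, ?_⟩
    · exact Ideal.sub_mem _ (Ideal.mul_mem_left _ _ (Ideal.mem_map_of_mem _ (hle hl)))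
        (Ideal.mem_map_of_mem _ ht)
    · have : (Polynomial.C s * Polynomial.C t : Polynomial A) = Polynomial.C c * Polynomial.C l := by
        rw [← map_mul, ← map_mul, hst]
      linear_combination this
  · exact ⟨0, Ideal.zero_mem _, by simp⟩
  · rintro x y _ _ ⟨u, hu, hu'⟩ ⟨v, hv, hv'⟩
    exact ⟨u + v, Ideal.add_mem _ hu hv, by rw [mul_add, hu', hv', mul_add]⟩
  · rintro r x _ ⟨u, hu, hu'⟩
    exact ⟨r * u, Ideal.mul_mem_left _ _ hu, by
      rw [smul_eq_mul]; linear_combination r * hu'⟩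

lemma QI_le {Λ Λ' : Ideal A} {s c : A} (hs : ∀ x, s * x = 0 → x = 0) (hle : Λ ≤ Λ')
    (hcov : ∀ l ∈ Λ, ∃ t ∈ Λ', s * t = c * l) : QI Λ s c ≤ Λ'.map Polynomial.C := by
  intro y hy
  obtain ⟨h, hh, e⟩ := mem_QI.1 hy
  obtain ⟨y', hy', e'⟩ := QI_cover hle hcov h hh
  rw [e] at e'
  rwa [Cs_inj hs e']

lemma QI_sreg {Λ : Ideal A} {s c : A} (hs : ∀ x, s * x = 0 → x = 0) 
    (hcov : ∀ l ∈ Λ, ∃ t, s * t = c * l) (hsΛ : s ∈ Λ) (hc : ∀ y, c * y ∈ Λ → y ∈ Λ)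
    (y : Polynomial A) (hy : Polynomial.C s * y ∈ QI Λ s c) : y ∈ QI Λ s c := by
  obtain ⟨h, hh, e⟩ := mem_QI.1 hy
  have hcan : ∀ {x y : A}, s * x = s * y → x = y := fun {x y} hxy => by
    rw [← sub_eq_zero]; apply hs; rw [mul_sub, hxy, sub_self]
  have key : ∀ j k : ℕ, h.natDegree < k + j → ∃ z ∈ Λ, h.coeff k = s * z := by
    intro j
    induction j with
    | zero =>
      intro k hk
      exact ⟨0, Λ.zero_mem, by rw [Polynomial.coeff_eq_zero_of_natDegree_lt (by simpa using hk), mul_zero]⟩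
    | succ j ih =>
      intro k hk
      obtain ⟨z, hz, hz'⟩ := ih (k+1) (by omega)
      obtain ⟨t, ht⟩ := hcov z hz
      have e1 := congrArg (fun p => Polynomial.coeff p (k+1)) e
      simp only [coeff_e_mul_succ, Polynomial.coeff_C_mul, hz'] at e1
      have e2 : h.coeff k = s * (y.coeff (k+1) + t) := by
        apply hcan
        linear_combination e1 - s * ht
      refine ⟨_, ?_, e2⟩
      apply hc
      rcases k with _ | k
      · have e3 := congrArg (fun p => Polynomial.coeff p 0) e
        simp only [coeff_e_mul_zero, Polynomial.coeff_C_mul] at e3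
        have : c * (y.coeff (0+1) + t) = - (s * y.coeff 0) := by
          apply hcan
          linear_combination -e3 - c * e2
        rw [this]
        exact Λ.neg_mem (Λ.mul_mem_right _ hsΛ)
      · have e3 := congrArg (fun p => Polynomial.coeff p (k+1)) e
        simp only [coeff_e_mul_succ, Polynomial.coeff_C_mul] at e3
        have : c * (y.coeff (k+1+1) + t) = h.coeff k - (s * y.coeff (k+1)) := by
          apply hcan
          linear_combination -e3 - c * e2
        rw [this]
        exact Λ.sub_mem (Ideal.mem_map_C_iff.1 hh k) (Λ.mul_mem_right _ hsΛ)
  have hmem : h ∈ Submodule.map (LinearMap.mulLeft (Polynomial A) (Polynomial.C s)) (Λ.map Polynomial.C) := by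
    rw [h.as_sum_range_C_mul_X_pow]
    refine Submodule.sum_mem _ (fun k _ => ?_)
    obtain ⟨z, hz, hz'⟩ := key (h.natDegree + 1) k (by omega)
    refine ⟨Polynomial.C z * Polynomial.X ^ k, Ideal.mul_mem_right _ _ (Ideal.mem_map_of_mem _ hz), ?_⟩
    simp [hz', mul_assoc]
  obtain ⟨z, hz, rfl⟩ := hmem
  refine mem_QI.2 ⟨z, hz, ?_⟩
  apply Cs_inj hs
  rw [← e]
  simp only [LinearMap.mulLeft_apply]
  ring

lemma QI_GR [IsNoetherianRing A] [IsJacobsonRing A] {Λ : Ideal A} {s c : A} {m : ℕ}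
    (hs : ∀ x, s * x = 0 → x = 0) (hcov : ∀ l ∈ Λ, ∃ t, s * t = c * l) (hA : GR A (m + 1))
    (hΛ : GR (A ⧸ Λ) m) : GR (Polynomial A ⧸ QI Λ s c) (m + 1) := by
  apply GR.of_dp (S := Polynomial A) Ideal.Quotient.mk_surjective
  intro P hP
  have d1 : DP P (m + 2) (Polynomial A) := DP.of_flat P hP hA.poly
  have d2 : DP P (m + 1) (Polynomial A ⧸ Λ.map Polynomial.C) :=
    GR.dp (S := Polynomial A) Ideal.Quotient.mk_surjective
      (hΛ.poly.congr (Ideal.polynomialQuotientEquivQuotientPolynomial Λ)) P hP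
  have d3 : DP P (m + 2) (Λ.map (Polynomial.C : A →+* Polynomial A)) :=
    DP.left (Submodule.subtype (Λ.map (Polynomial.C : A →+* Polynomial A))) (Submodule.mkQ _)
      (LinearMap.exact_subtype_mkQ _) (Submodule.injective_subtype _) (Submodule.mkQ_surjective _)
      d1 d2 le_rfl
  have i1 : Function.Injective (LinearMap.mulLeft (Polynomial A) (Polynomial.C s)) :=
    fun x y hxy => Cs_inj hs hxy
  have i2 : Function.Injective (LinearMap.mulLeft (Polynomial A)
      (Polynomial.C s * Polynomial.X - Polynomial.C c)) := fun x y hxy => by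
    rw [← sub_eq_zero]
    apply e_inj hs (c := c)
    simp only [LinearMap.mulLeft_apply] at hxy
    rw [mul_sub, hxy, sub_self]
  have heq : Submodule.map (LinearMap.mulLeft (Polynomial A) (Polynomial.C s)) (QI Λ s c) =
    Submodule.map (LinearMap.mulLeft (Polynomial A) (Polynomial.C s * Polynomial.X - Polynomial.C c))
      (Λ.map Polynomial.C) := by
    apply le_antisymm
    · exact Submodule.map_comap_le _ _
    · rintro _ ⟨h, hh, rfl⟩
      obtain ⟨y, -, hy⟩ := QI_cover (Λ' := ⊤) le_top (fun l hl => by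
        obtain ⟨t, ht⟩ := hcov l hl; exact ⟨t, trivial, ht⟩) h hh
      exact ⟨y, mem_QI.2 ⟨h, hh, hy⟩, hy.symm⟩
  have d4 : DP P (m + 2) (QI Λ s c) :=
    ((d3.congr (Submodule.equivMapOfInjective _ i2 _)).congr (LinearEquiv.ofEq _ _ heq.symm)).congr
      (Submodule.equivMapOfInjective _ i1 _).symm
  exact DP.right (Submodule.subtype (QI Λ s c)) (Submodule.mkQ _)
      (LinearMap.exact_subtype_mkQ _) (Submodule.injective_subtype _) (Submodule.mkQ_surjective _)
      (d1.mono (by omega)) d4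

end QIdeal

section Stage
variable {B : Type} [CommRing B]

structure Pre (a : ℕ → B) (i : ℕ) (A : Type) [CommRing A] [Algebra B A] (T : ℕ → A)
    (ρ : A →ₐ[B] Polynomial B) : Prop where
  noeth : IsNoetherianRing A
  jac : IsJacobsonRing A
  h1 : ∀ j < i, algebraMap B A (a 0) * T j = algebraMap B A (a j) * T 0
  h3 : ∀ j < i, ρ (T j) = Polynomial.C (a j) * Polynomial.X
  h4 : Algebra.adjoin B (T '' {j | j < i}) = ⊤

lemma Pre.lift {a : ℕ → B} {i : ℕ} {A : Type} [CommRing A] [Algebra B A] {T : ℕ → A}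
    {ρ : A →ₐ[B] Polynomial B} (H : Pre a i A T ρ) {z : B} (hz : z ∈ aI a i) :
    ∃ t : A, algebraMap B A (a 0) * t = algebraMap B A z * T 0 := by
  refine Submodule.span_induction
    (p := fun z _ => ∃ t : A, algebraMap B A (a 0) * t = algebraMap B A z * T 0) ?_ ?_ ?_ ?_ hz
  · rintro _ ⟨j, hj, rfl⟩
    exact ⟨T j, H.h1 j hj⟩
  · exact ⟨0, by simp⟩
  · rintro x y _ _ ⟨u, hu⟩ ⟨v, hv⟩
    exact ⟨u + v, by rw [mul_add, hu, hv, map_add, add_mul]⟩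
  · rintro r x _ ⟨u, hu⟩
    exact ⟨algebraMap B A r * u, by
      rw [smul_eq_mul, map_mul]; linear_combination algebraMap B A r * hu⟩

lemma Pre.cov {a : ℕ → B} {i : ℕ} {A : Type} [CommRing A] [Algebra B A] {T : ℕ → A}
    {ρ : A →ₐ[B] Polynomial B} (H : Pre a i A T ρ) {L : Ideal B} {b : B}
    (hL : ∀ l ∈ L, l * b ∈ aI a i) : ∀ l ∈ L.map (algebraMap B A),
    ∃ t, algebraMap B A (a 0) * t = (algebraMap B A b * T 0) * l := by
  intro l hl
  refine Submodule.span_induction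
    (p := fun l _ => ∃ t, algebraMap B A (a 0) * t = (algebraMap B A b * T 0) * l) ?_ ?_ ?_ ?_ hl
  · rintro _ ⟨l, hl, rfl⟩
    obtain ⟨t, ht⟩ := H.lift (hL l hl)
    exact ⟨t, by rw [ht, map_mul]; ring⟩
  · exact ⟨0, by simp⟩
  · rintro x y _ _ ⟨u, hu⟩ ⟨v, hv⟩
    exact ⟨u + v, by rw [mul_add, hu, hv, mul_add]⟩
  · rintro r x _ ⟨u, hu⟩
    exact ⟨r * u, by rw [smul_eq_mul]; linear_combination r * hu⟩

/-- the next algebra -/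
abbrev NA (a : ℕ → B) (A : Type) [CommRing A] [Algebra B A] (T : ℕ → A) (L : Ideal B) (b : B) : Type :=
  Polynomial A ⧸ QI (L.map (algebraMap B A)) (algebraMap B A (a 0)) (algebraMap B A b * T 0)

noncomputable def NT (a : ℕ → B) (i : ℕ) (A : Type) [CommRing A] [Algebra B A] (T : ℕ → A) (L : Ideal B) (b : B) :
    ℕ → NA a A T L b := fun j =>
  if j < i then Ideal.Quotient.mk _ (Polynomial.C (T j)) else Ideal.Quotient.mk _ Polynomial.X

noncomputable def preρ {A : Type} [CommRing A] [Algebra B A] (ρ : A →ₐ[B] Polynomial B) (b : B) :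
    Polynomial A →ₐ[B] Polynomial B :=
  Polynomial.eval₂AlgHom ρ (Polynomial.C b * Polynomial.X) (fun _ => Commute.all _ _)

lemma preρ_C {A : Type} [CommRing A] [Algebra B A] (ρ : A →ₐ[B] Polynomial B) (b : B) (x : A) :
    preρ ρ b (Polynomial.C x) = ρ x := by simp [preρ]

lemma preρ_X {A : Type} [CommRing A] [Algebra B A] (ρ : A →ₐ[B] Polynomial B) (b : B) :
    preρ ρ b Polynomial.X = Polynomial.C b * Polynomial.X := by simp [preρ]

lemma Pre.kill {a : ℕ → B} {i : ℕ} {A : Type} [CommRing A] [Algebra B A] {T : ℕ → A}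
    {ρ : A →ₐ[B] Polynomial B} (H : Pre a i A T ρ) (hi : 0 < i) (h0 : ∀ x, a 0 * x = 0 → x = 0)
    (L : Ideal B) (b : B) : ∀ y ∈ QI (L.map (algebraMap B A)) (algebraMap B A (a 0))
      (algebraMap B A b * T 0), preρ ρ b y = 0 := by
  intro y hy
  obtain ⟨h, hh, e⟩ := mem_QI.1 hy
  have e' := congrArg (preρ ρ b) e
  simp only [map_mul, map_sub, preρ_C, preρ_X, AlgHom.commutes, H.h3 0 hi] at e'
  have : ∀ z : B, algebraMap B (Polynomial B) z = Polynomial.C z := fun _ => rfl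
  rw [this, this] at e'
  apply Cs_inj h0
  rw [← e']; ring

noncomputable def Pre.nρ {a : ℕ → B} {i : ℕ} {A : Type} [CommRing A] [Algebra B A] {T : ℕ → A}
    {ρ : A →ₐ[B] Polynomial B} (H : Pre a i A T ρ) (hi : 0 < i) (h0 : ∀ x, a 0 * x = 0 → x = 0)
    (L : Ideal B) (b : B) : NA a A T L b →ₐ[B] Polynomial B :=
  Ideal.Quotient.liftₐ _ (preρ ρ b) (H.kill hi h0 L b)

lemma NA_alg (a : ℕ → B) {A : Type} [CommRing A] [Algebra B A] (T : ℕ → A) (L : Ideal B) (b : B) (x : B) :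
    algebraMap B (NA a A T L b) x = Ideal.Quotient.mk _ (Polynomial.C (algebraMap B A x)) := rfl

lemma Pre.step {a : ℕ → B} {i : ℕ} {A : Type} [CommRing A] [Algebra B A] {T : ℕ → A}
    {ρ : A →ₐ[B] Polynomial B} (H : Pre a i A T ρ) (hi : 0 < i) (h0 : ∀ x, a 0 * x = 0 → x = 0)
    (L : Ideal B) (ha0 : a 0 ∈ L) :
    Pre a (i + 1) (NA a A T L (a i)) (NT a i A T L (a i)) (H.nρ hi h0 L (a i)) where
  noeth := by have := H.noeth; infer_instance
  jac := by have := H.jac; infer_instance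
  h1 := by
    intro j hj
    have hT0 : NT a i A T L (a i) 0 = Ideal.Quotient.mk _ (Polynomial.C (T 0)) := by
      simp [NT, hi]
    rw [hT0, NA_alg, NA_alg]
    by_cases hji : j < i
    · have hTj : NT a i A T L (a i) j = Ideal.Quotient.mk _ (Polynomial.C (T j)) := by
        simp [NT, hji]
      rw [hTj, ← map_mul, ← map_mul, ← map_mul, ← map_mul, H.h1 j hji]
    · obtain rfl : j = i := by omega
      have hTj : NT a j A T L (a j) j = Ideal.Quotient.mk _ (Polynomial.X) := by
        simp [NT]
      rw [hTj, ← map_mul, ← map_mul, ← map_mul, Ideal.Quotient.mk_eq_mk_iff_sub_mem]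
      exact mem_QI.2 ⟨Polynomial.C (algebraMap B A (a 0)),
        Ideal.mem_map_of_mem _ (Ideal.mem_map_of_mem _ ha0), by ring⟩
  h3 := by
    intro j hj
    by_cases hji : j < i
    · have hTj : NT a i A T L (a i) j = Ideal.Quotient.mk _ (Polynomial.C (T j)) := by
        simp [NT, hji]
      rw [hTj]
      exact (preρ_C _ _ _).trans (H.h3 j hji)
    · obtain rfl : j = i := by omega
      have hTj : NT a j A T L (a j) j = Ideal.Quotient.mk _ (Polynomial.X) := by
        simp [NT]
      rw [hTj]
      exact preρ_X _ _
  h4 := by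
    set W := Algebra.adjoin B (NT a i A T L (a i) '' {j | j < i + 1}) with hW
    let q : Polynomial A →ₐ[B] NA a A T L (a i) := Ideal.Quotient.mkₐ B _
    have hX : q Polynomial.X ∈ W := by
      apply Algebra.subset_adjoin
      refine ⟨i, Nat.lt_succ_self i, ?_⟩
      simp [NT, q]
    have hC : ∀ x : A, q (Polynomial.C x) ∈ W := by
      have : (⊤ : Subalgebra B A) ≤ W.comap (q.comp (Polynomial.CAlgHom (R := B) (A := A))) := by
        rw [← H.h4, Algebra.adjoin_le_iff]
        rintro _ ⟨j, hj, rfl⟩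
        have hj' : j < i := hj
        apply Algebra.subset_adjoin
        refine ⟨j, Nat.lt_succ_of_lt hj', ?_⟩
        simp [NT, q, hj']
      exact fun x => this (Algebra.mem_top (x := x))
    rw [eq_top_iff]
    rintro y -
    obtain ⟨p, rfl⟩ := Ideal.Quotient.mk_surjective y
    change q p ∈ W
    rw [p.as_sum_range_C_mul_X_pow, map_sum]
    refine Subalgebra.sum_mem _ fun k _ => ?_
    rw [map_mul, map_pow]
    exact W.mul_mem (hC _) (W.pow_mem hX _)

lemma Pre.rel {a : ℕ → B} {i : ℕ} {A : Type} [CommRing A] [Algebra B A] {T : ℕ → A}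
    {ρ : A →ₐ[B] Polynomial B} (H : Pre a i A T ρ)
    (L : Ideal B) (hL : ∀ x, x ∈ L ↔ x * a i ∈ aI a i) (p : ℕ → B)
    (hp : ∑ j ∈ Finset.range (i + 1), p j * a j = 0) :
    ∑ j ∈ Finset.range (i + 1), algebraMap B _ (p j) * NT a i A T L (a i) j = 0 := by
  rw [Finset.sum_range_succ] at hp ⊢
  have hpi : p i ∈ L := by
    rw [hL, eq_neg_of_add_eq_zero_right hp]
    exact neg_mem (Ideal.sum_mem _ fun j hj =>
      Ideal.mul_mem_left _ _ (aI_mem a (by simpa using hj)))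
  have e1 : ∀ j ∈ Finset.range i, algebraMap B (NA a A T L (a i)) (p j) * NT a i A T L (a i) j =
      Ideal.Quotient.mk _ (Polynomial.C (algebraMap B A (p j) * T j)) := by
    intro j hj
    have : j < i := by simpa using hj
    rw [NA_alg]; simp [NT, this]
  have e2 : algebraMap B (NA a A T L (a i)) (p i) * NT a i A T L (a i) i =
      Ideal.Quotient.mk _ (Polynomial.C (algebraMap B A (p i)) * Polynomial.X) := by
    rw [NA_alg]; simp [NT]
  rw [Finset.sum_congr rfl e1, e2, ← map_sum, ← map_add, Ideal.Quotient.eq_zero_iff_mem]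
  refine mem_QI.2 ⟨Polynomial.C (algebraMap B A (p i)), Ideal.mem_map_of_mem _ (Ideal.mem_map_of_mem _ hpi), ?_⟩
  rw [← map_sum, mul_add, ← map_mul (Polynomial.C), Finset.mul_sum]
  have e3 : ∑ j ∈ Finset.range i, algebraMap B A (a 0) * (algebraMap B A (p j) * T j) =
      - (algebraMap B A (p i) * algebraMap B A (a i) * T 0) := by
    have e4 : ∀ j ∈ Finset.range i, algebraMap B A (a 0) * (algebraMap B A (p j) * T j) =
        algebraMap B A (p j * a j) * T 0 := by
      intro j hj
      rw [map_mul]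
      linear_combination (algebraMap B A (p j)) * H.h1 j (by simpa using hj)
    rw [Finset.sum_congr rfl e4, ← Finset.sum_mul, ← map_sum, eq_neg_of_add_eq_zero_left hp, map_neg, map_mul]
    ring
  rw [e3]
  simp only [map_neg, map_mul]
  ring

structure Stg (m : ℕ) (a : ℕ → B) (i : ℕ) (A : Type) [CommRing A] [Algebra B A] (T : ℕ → A)
    (ρ : A →ₐ[B] Polynomial B) : Prop extends Pre a i A T ρ where
  h2 : ∀ x : A, algebraMap B A (a 0) * x = 0 → x = 0
  h5a : ∀ 𝔟 : Ideal B, aI a i ≤ 𝔟 → ∀ d, GR (B ⧸ 𝔟) d → GR (A ⧸ 𝔟.map (algebraMap B A)) (d + i)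
  h5b : ∀ 𝔟 : Ideal B, aI a i ≤ 𝔟 → ∀ c, (∀ x, c * x ∈ 𝔟 → x ∈ 𝔟) →
    ∀ x, algebraMap B A c * x ∈ 𝔟.map (algebraMap B A) → x ∈ 𝔟.map (algebraMap B A)
  h5c : ∀ 𝔟 : Ideal B, aI a i ≤ 𝔟 →
    ∀ x, T 0 * x ∈ 𝔟.map (algebraMap B A) → x ∈ 𝔟.map (algebraMap B A)
  h6 : GR A (m + 1)

lemma map_C_nzd {A : Type} [CommRing A] (J : Ideal A) (c : A) (hc : ∀ x, c * x ∈ J → x ∈ J)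
    (p : Polynomial A) (hp : Polynomial.C c * p ∈ J.map Polynomial.C) : p ∈ J.map Polynomial.C := by
  rw [Ideal.mem_map_C_iff] at hp ⊢
  intro k
  have := hp k
  rw [Polynomial.coeff_C_mul] at this
  exact hc _ this

lemma Stg.base {m : ℕ} [IsNoetherianRing B] [IsJacobsonRing B] (hG : GR B m) (a : ℕ → B)
    (h0 : ∀ x, a 0 * x = 0 → x = 0) :
    Stg m a 1 (Polynomial B) (fun _ => Polynomial.X)
      (Polynomial.aeval (Polynomial.C (a 0) * Polynomial.X)) where
  noeth := inferInstance
  jac := inferInstance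
  h1 := by
    intro j hj
    obtain rfl : j = 0 := by omega
    rfl
  h3 := by
    intro j hj
    obtain rfl : j = 0 := by omega
    simp
  h4 := by
    have : (fun _ : ℕ => (Polynomial.X : Polynomial B)) '' {j | j < 1} = {Polynomial.X} := by
      ext x; constructor
      · rintro ⟨j, hj, rfl⟩; rfl
      · rintro rfl; exact ⟨0, Nat.one_pos, rfl⟩
    rw [this, Polynomial.adjoin_X]
  h2 := by
    intro x hx
    exact Cs_inj h0 (by rw [mul_zero]; exact hx)
  h5a := by
    intro 𝔟 _ d hd
    exact hd.poly.congr (Ideal.polynomialQuotientEquivQuotientPolynomial 𝔟)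
  h5b := by
    intro 𝔟 _ c hc x hx
    exact map_C_nzd 𝔟 c hc x hx
  h5c := by
    intro 𝔟 _ x hx
    change x ∈ 𝔟.map Polynomial.C
    replace hx : Polynomial.X * x ∈ 𝔟.map Polynomial.C := hx
    rw [Ideal.mem_map_C_iff] at hx ⊢
    intro k
    simpa using hx (k + 1)
  h6 := hG.poly

lemma Stg.step {m n : ℕ} [IsNoetherianRing B] (hG : GR B m) (hn : n ≤ m) {a : ℕ → B}
    (ha : ∀ i < n, ∀ c, c * a i ∈ aI a i → c ∈ aI a i)
    {i : ℕ} {A : Type} [CommRing A] [Algebra B A] {T : ℕ → A}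
    {ρ : A →ₐ[B] Polynomial B} (H : Stg m a i A T ρ) (hi : 0 < i) (hin : i < n)
    (h0 : ∀ x, a 0 * x = 0 → x = 0) :
    Stg m a (i + 1) (NA a A T (aI a i) (a i)) (NT a i A T (aI a i) (a i))
      (H.toPre.nρ hi h0 (aI a i) (a i)) := by
  have := H.noeth
  have := H.jac
  have ha0 : a 0 ∈ aI a i := aI_mem a hi
  set Λ := (aI a i).map (algebraMap B A) with hΛ
  set s := algebraMap B A (a 0) with hs
  set c := algebraMap B A (a i) * T 0 with hc
  have hcov := H.toPre.cov (L := aI a i) (b := a i) (fun l hl => Ideal.mul_mem_right _ _ hl)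
  have hQle : ∀ 𝔟 : Ideal B, aI a (i + 1) ≤ 𝔟 → QI Λ s c ≤ (𝔟.map (algebraMap B A)).map Polynomial.C := by
    intro 𝔟 hb
    have hle : aI a i ≤ 𝔟 := le_trans (by rw [aI_succ]; exact le_sup_left) hb
    refine QI_le H.h2 (Ideal.map_mono hle) ?_
    intro l hl
    refine Submodule.span_induction
      (p := fun l _ => ∃ t ∈ 𝔟.map (algebraMap B A), s * t = c * l) ?_ ?_ ?_ ?_ hl
    · rintro _ ⟨l, hl, rfl⟩
      obtain ⟨t, ht⟩ := H.toPre.lift hl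
      refine ⟨algebraMap B A (a i) * t, Ideal.mul_mem_right _ _ (Ideal.mem_map_of_mem _ (hb (aI_mem a (Nat.lt_succ_self i)))), ?_⟩
      rw [hc]; linear_combination algebraMap B A (a i) * ht
    · exact ⟨0, Ideal.zero_mem _, by simp⟩
    · rintro x y _ _ ⟨u, hu0, hu⟩ ⟨v, hv0, hv⟩
      exact ⟨u + v, Ideal.add_mem _ hu0 hv0, by rw [mul_add, hu, hv, mul_add]⟩
    · rintro r x _ ⟨u, hu0, hu⟩
      exact ⟨r * u, Ideal.mul_mem_left _ _ hu0, by rw [smul_eq_mul]; linear_combination r * hu⟩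
  have hmap : ∀ 𝔟 : Ideal B, 𝔟.map (algebraMap B (NA a A T (aI a i) (a i))) =
      ((𝔟.map (algebraMap B A)).map Polynomial.C).map (Ideal.Quotient.mk (QI Λ s c)) := by
    intro 𝔟
    rw [Ideal.map_map, Ideal.map_map]; rfl
  have hmem : ∀ 𝔟 : Ideal B, aI a (i + 1) ≤ 𝔟 → ∀ p : Polynomial A,
      (Ideal.Quotient.mk (QI Λ s c) p ∈ 𝔟.map (algebraMap B (NA a A T (aI a i) (a i))) ↔
      p ∈ (𝔟.map (algebraMap B A)).map Polynomial.C) := by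
    intro 𝔟 hb p
    rw [hmap]
    constructor
    · intro hp
      obtain ⟨q, hq, e⟩ := (Ideal.mem_map_iff_of_surjective _ Ideal.Quotient.mk_surjective).1 hp
      rw [eq_comm, Ideal.Quotient.mk_eq_mk_iff_sub_mem] at e
      have := Ideal.add_mem _ (hQle 𝔟 hb e) hq
      simpa using this
    · exact Ideal.mem_map_of_mem _
  have hGi : GR (B ⧸ aI a i) (m - i) := GR.of_dp (S := B) Ideal.Quotient.mk_surjective (fun P hP =>
    aI_dp hG (by omega) a (fun j hj => ha j (by omega)) P hP)
  have hcn : ∀ y, c * y ∈ Λ → y ∈ Λ := by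
    intro y hy
    rw [hc, mul_assoc] at hy
    exact H.h5c _ le_rfl _ (H.h5b _ le_rfl (a i)
      (fun x hx => ha i hin x (by rwa [mul_comm])) _ hy)
  have hle' : ∀ 𝔟 : Ideal B, aI a (i + 1) ≤ 𝔟 → aI a i ≤ 𝔟 := fun 𝔟 hb =>
    le_trans (by rw [aI_succ]; exact le_sup_left) hb
  refine { toPre := H.toPre.step hi h0 _ ha0, h2 := ?_, h5a := ?_, h5b := ?_, h5c := ?_, h6 := ?_ }
  · intro x hx
    obtain ⟨p, rfl⟩ := Ideal.Quotient.mk_surjective x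
    rw [NA_alg, ← map_mul, Ideal.Quotient.eq_zero_iff_mem] at hx
    rw [Ideal.Quotient.eq_zero_iff_mem]
    exact QI_sreg H.h2 hcov (Ideal.mem_map_of_mem _ ha0) hcn p hx
  · intro 𝔟 hb d hd
    have h1 := (H.h5a 𝔟 (hle' 𝔟 hb) d hd).poly.congr
      (Ideal.polynomialQuotientEquivQuotientPolynomial (𝔟.map (algebraMap B A)))
    rw [hmap]
    exact GR.congr (R' := (Polynomial A ⧸ QI Λ s c) ⧸ map (Ideal.Quotient.mk (QI Λ s c)) (map Polynomial.C (map (algebraMap B A) 𝔟)))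
      (DoubleQuot.quotQuotEquivQuotOfLE (hQle 𝔟 hb)).symm h1
  · intro 𝔟 hb c hc x hx
    obtain ⟨p, rfl⟩ := Ideal.Quotient.mk_surjective x
    rw [NA_alg, ← map_mul, hmem 𝔟 hb] at hx
    rw [hmem 𝔟 hb]
    exact map_C_nzd _ _ (H.h5b 𝔟 (hle' 𝔟 hb) c hc) _ hx
  · intro 𝔟 hb x hx
    obtain ⟨p, rfl⟩ := Ideal.Quotient.mk_surjective x
    have hT0 : NT a i A T (aI a i) (a i) 0 = Ideal.Quotient.mk _ (Polynomial.C (T 0)) := by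
      simp [NT, hi]
    rw [hT0, ← map_mul, hmem 𝔟 hb] at hx
    rw [hmem 𝔟 hb]
    exact map_C_nzd _ _ (H.h5c 𝔟 (hle' 𝔟 hb)) _ hx
  · refine QI_GR H.h2 hcov H.h6 ?_
    have := H.h5a (aI a i) le_rfl _ hGi
    rwa [Nat.sub_add_cancel (by omega)] at this

/-- existence of all stages -/
lemma Stg.exists {m n : ℕ} [IsNoetherianRing B] [IsJacobsonRing B] (hG : GR B m) (hn : n ≤ m)
    {a : ℕ → B} (ha : ∀ i < n, ∀ c, c * a i ∈ aI a i → c ∈ aI a i)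
    (h0 : ∀ x, a 0 * x = 0 → x = 0) (i : ℕ) (hi : 0 < i) (hin : i ≤ n) :
    ∃ (A : Type) (_ : CommRing A) (_ : Algebra B A) (T : ℕ → A) (ρ : A →ₐ[B] Polynomial B),
      Stg m a i A T ρ := by
  induction i with
  | zero => omega
  | succ i ih =>
    rcases Nat.eq_zero_or_pos i with rfl | h
    · exact ⟨_, _, _, _, _, Stg.base hG a h0⟩
    · obtain ⟨A, _, _, T, ρ, H⟩ := ih h (by omega)
      exact ⟨_, _, _, _, _, H.step hG hn ha h hin h0⟩

/-- the final algebra -/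
lemma final_alg {m n : ℕ} [IsNoetherianRing B] [IsJacobsonRing B] (hG : GR B m) (hn : n ≤ m)
    (hn0 : 0 < n) {a : ℕ → B} (ha : ∀ i < n, ∀ c, c * a i ∈ aI a i → c ∈ aI a i)
    (hI : ∀ P : Ideal B, P.IsMaximal → DP P (m - n) (B ⧸ aI a (n + 1))) :
    ∃ (A : Type) (_ : CommRing A) (_ : Algebra B A) (T : ℕ → A) (ρ : A →ₐ[B] Polynomial B),
      Pre a (n + 1) A T ρ ∧ GR A (m + 1) ∧
      ∀ p : ℕ → B, ∑ j ∈ Finset.range (n + 1), p j * a j = 0 →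
        ∑ j ∈ Finset.range (n + 1), algebraMap B A (p j) * T j = 0 := by
  have h0 : ∀ x, a 0 * x = 0 → x = 0 := by
    intro x hx
    have := ha 0 hn0 x
    simpa [aI, mul_comm x, hx] using this
  obtain ⟨A, _, _, T, ρ, H⟩ := Stg.exists hG hn ha h0 n hn0 le_rfl
  have := H.noeth
  have := H.jac
  let L : Ideal B := Submodule.comap (LinearMap.mulRight B (a n)) (aI a n)
  have hL : ∀ x, x ∈ L ↔ x * a n ∈ aI a n := fun x => by simp [L]
  have ha0 : a 0 ∈ L := (hL _).2 (Ideal.mul_mem_right _ _ (aI_mem a hn0))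
  have hGL : GR (B ⧸ L) (m - n) := GR.of_dp (S := B) Ideal.Quotient.mk_surjective (fun P hP =>
    (link_left P (aI a n) L (aI a (n+1)) (a n) hL (aI_succ a n)).1 (aI_dp hG hn a ha P hP) (hI P hP) (by omega))
  have hle : aI a n ≤ L := fun x hx => (hL x).2 (Ideal.mul_mem_right _ _ hx)
  refine ⟨_, _, _, _, _, H.toPre.step hn0 h0 L ha0, ?_, fun p hp => H.toPre.rel L hL p hp⟩
  refine QI_GR H.h2 (H.toPre.cov (fun l hl => (hL l).1 hl)) H.h6 ?_
  have := H.h5a L hle _ hGL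
  rwa [Nat.sub_add_cancel hn] at this

end Stage

section LinT
variable {B : Type} [CommRing B] {k : ℕ}

noncomputable def Phi (g : Fin k → B) : MvPolynomial (Fin k) B →ₐ[B] Polynomial B :=
  MvPolynomial.aeval (fun j => Polynomial.C (g j) * Polynomial.X)

noncomputable def lin (p : Fin k → B) : MvPolynomial (Fin k) B :=
  ∑ j, MvPolynomial.C (p j) * MvPolynomial.X j

noncomputable def Syz (g : Fin k → B) : Ideal (MvPolynomial (Fin k) B) :=
  Ideal.span {q | ∃ p : Fin k → B, ∑ j, p j * g j = 0 ∧ q = lin p}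

def LinT (g : Fin k → B) : Prop := ∀ p, Phi g p = 0 → p ∈ Syz g

lemma Phi_lin (g p : Fin k → B) : Phi g (lin p) = Polynomial.C (∑ j, p j * g j) * Polynomial.X := by
  simp only [Phi, lin, map_sum, map_mul, MvPolynomial.aeval_X, MvPolynomial.algHom_C, Finset.sum_mul, mul_assoc]
  rfl

lemma yl_decomp (q : MvPolynomial (Fin k) B)
    (hq : ∀ w : Fin k →₀ ℕ, MvPolynomial.coeff w q ≠ 0 → (∑ j, w j) ≤ 1) :
    q = MvPolynomial.C (MvPolynomial.coeff 0 q) +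
      lin (fun j => MvPolynomial.coeff (Finsupp.single j 1) q) := by
  ext w
  simp only [lin, MvPolynomial.coeff_add, MvPolynomial.coeff_C, MvPolynomial.coeff_sum,
    MvPolynomial.coeff_C_mul, MvPolynomial.coeff_X, mul_ite, mul_one, mul_zero]
  by_cases h0 : w = 0
  · subst h0; simp
  · rw [if_neg (Ne.symm h0), zero_add]
    obtain ⟨j, hj⟩ : ∃ j, w j ≠ 0 := by
      by_contra hcon
      push Not at hcon
      exact h0 (Finsupp.ext hcon)
    by_cases h1 : (∑ j, w j) ≤ 1
    · have hw : w = Finsupp.single j 1 := by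
        ext i
        have hs := Finset.add_sum_erase Finset.univ (fun j => w j) (Finset.mem_univ j)

        by_cases hij : i = j
        · subst hij; simp; omega
        · have hle : w i ≤ ∑ x ∈ Finset.univ.erase j, w x :=
            Finset.single_le_sum (f := fun x => w x) (fun _ _ => Nat.zero_le _) (by simp [hij])
          rw [Finsupp.single_apply, if_neg (Ne.symm hij)]; omega
      subst hw
      rw [Finset.sum_eq_single j]
      · simp
      · intro b _ hb
        rw [if_neg]
        intro h
        exact hb (Finsupp.single_left_injective one_ne_zero h)
      · simp
    · have : MvPolynomial.coeff w q = 0 := by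
        by_contra hc; exact h1 (hq w hc)
      rw [this, Finset.sum_eq_zero]
      intro i _
      rw [if_neg]
      rintro rfl
      apply h1
      simp [Finsupp.single_apply]

lemma lt_of_pres {n : ℕ} (I : Ideal B) (f : Fin (n + 1) → B) (hf : ∀ j, f j ∈ I)
    (h : IsLinearTypePres (reesStructureMap I f hf)) : LinT f := by
  obtain ⟨G, hG, hker⟩ := h
  have hPhi : Phi f = (reesAlgebra I).val.comp (reesStructureMap I f hf) := by
    apply MvPolynomial.algHom_ext
    intro j
    simp [Phi, reesStructureMap, fX]
  have hmem : ∀ p, Phi f p = 0 ↔ p ∈ Ideal.span G := by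
    intro p
    rw [← hker, RingHom.mem_ker, hPhi]
    simp
  intro p hp
  rw [hmem] at hp
  refine (Ideal.span_le.2 ?_) hp
  intro q hq
  have h1 := yl_decomp q (hG q hq)
  have h2 := (hmem q).2 (Ideal.subset_span hq)
  rw [h1, map_add, Phi_lin] at h2
  have h3 := congrArg (fun p => Polynomial.coeff p 0) h2
  have h4 := congrArg (fun p => Polynomial.coeff p 1) h2
  have hC : ∀ c, Phi f (MvPolynomial.C c) = Polynomial.C c := fun c => by
    simp [Phi, Polynomial.algebraMap_eq]
  rw [hC] at h3 h4
  simp [Polynomial.coeff_C] at h3 h4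
  apply Ideal.subset_span
  refine ⟨_, h4, ?_⟩
  conv_lhs => rw [h1, h3, map_zero, zero_add]

noncomputable def Th (E : Fin k → Fin k → B) : MvPolynomial (Fin k) B →ₐ[B] MvPolynomial (Fin k) B :=
  MvPolynomial.aeval (fun j => lin (E j))

lemma Th_lin (E : Fin k → Fin k → B) (p : Fin k → B) :
    Th E (lin p) = lin (fun i => ∑ j, p j * E j i) := by
  simp only [Th, lin, map_sum, map_mul, MvPolynomial.aeval_X, MvPolynomial.algHom_C, Finset.mul_sum, Finset.sum_mul]
  rw [Finset.sum_comm]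
  refine Finset.sum_congr rfl fun i _ => Finset.sum_congr rfl fun j _ => ?_
  rw [MvPolynomial.algebraMap_eq]; ring

lemma Phi_Th (E : Fin k → Fin k → B) (f g : Fin k → B) (h : ∀ j, g j = ∑ i, E j i * f i) (p) :
    Phi f (Th E p) = Phi g p := by
  have : (Phi f).comp (Th E) = Phi g := by
    apply MvPolynomial.algHom_ext
    intro j
    simp only [Th, AlgHom.comp_apply, MvPolynomial.aeval_X, Phi_lin, ← h]
    simp [Phi]
  rw [← this]; rfl

lemma mem_Syz {g p : Fin k → B} (h : ∑ j, p j * g j = 0) : lin p ∈ Syz g :=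
  Ideal.subset_span ⟨p, h, rfl⟩

lemma Syz_le {g : Fin k → B} {J : Ideal (MvPolynomial (Fin k) B)}
    (h : ∀ p : Fin k → B, ∑ j, p j * g j = 0 → lin p ∈ J) : Syz g ≤ J := by
  refine Ideal.span_le.2 ?_
  rintro _ ⟨q, hq, rfl⟩
  exact h q hq

lemma LinT.change_aux1 {f g : Fin k → B} (F : Fin k → Fin k → B) (hF : ∀ j, f j = ∑ i, F j i * g i) :
    Syz f ≤ (Syz g).comap (Th F) := by
  refine Syz_le fun q hq => ?_
  rw [Ideal.mem_comap, Th_lin]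
  apply mem_Syz
  simp only [Finset.sum_mul]
  rw [Finset.sum_comm, ← hq]
  refine Finset.sum_congr rfl fun j _ => ?_
  rw [hF j, Finset.mul_sum]
  refine Finset.sum_congr rfl fun i _ => by ring

lemma lin_single (j : Fin k) : lin (Pi.single j (1 : B)) = MvPolynomial.X j := by
  rw [lin, Finset.sum_eq_single j]
  · simp
  · intro b _ hb; simp [Pi.single_eq_of_ne hb]
  · simp

lemma lin_sub (p q : Fin k → B) : lin (p - q) = lin p - lin q := by
  simp [lin, sub_mul, Finset.sum_sub_distrib]

lemma LinT.change_aux2 {f g : Fin k → B} (E F : Fin k → Fin k → B) (hE : ∀ j, g j = ∑ i, E j i * f i)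
    (hF : ∀ j, f j = ∑ i, F j i * g i) (j : Fin k) :
    Th F (Th E (MvPolynomial.X j)) - MvPolynomial.X j ∈ Syz g := by
  have e1 : Th E (MvPolynomial.X j) = lin (E j) := by simp [Th]
  rw [e1, Th_lin, ← lin_single, ← lin_sub]
  apply mem_Syz
  simp only [Pi.sub_apply, sub_mul, Finset.sum_sub_distrib]
  have e3 : ∑ i, (Pi.single j 1 : Fin k → B) i * g i = g j := by
    rw [Finset.sum_eq_single j]
    · simp
    · intro b _ hb; simp [Pi.single_eq_of_ne hb]
    · simp
  rw [e3, sub_eq_zero, hE j]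
  simp only [Finset.sum_mul]
  rw [Finset.sum_comm]
  refine Finset.sum_congr rfl fun l _ => ?_
  rw [hF l, Finset.mul_sum]
  refine Finset.sum_congr rfl fun i _ => by ring

lemma LinT.change_aux3 {J : Ideal (MvPolynomial (Fin k) B)}
    (θ : MvPolynomial (Fin k) B →ₐ[B] MvPolynomial (Fin k) B)
    (h : ∀ j, θ (MvPolynomial.X j) - MvPolynomial.X j ∈ J) (p) : θ p - p ∈ J := by
  induction p using MvPolynomial.induction_on with
  | C c =>
    change θ (algebraMap B _ c) - algebraMap B _ c ∈ J
    rw [AlgHom.commutes, sub_self]; exact J.zero_mem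
  | add p q hp hq =>
    rw [map_add, add_sub_add_comm]; exact J.add_mem hp hq
  | mul_X p j hp =>
    have : θ (p * MvPolynomial.X j) - p * MvPolynomial.X j =
      θ p * (θ (MvPolynomial.X j) - MvPolynomial.X j) + MvPolynomial.X j * (θ p - p) := by
      rw [map_mul]; ring
    rw [this]
    exact J.add_mem (J.mul_mem_left _ (h j)) (J.mul_mem_left _ hp)

lemma LinT.change {f g : Fin k → B} (hf : LinT f)
    (E F : Fin k → Fin k → B) (hE : ∀ j, g j = ∑ i, E j i * f i) (hF : ∀ j, f j = ∑ i, F j i * g i) :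
    LinT g := by
  intro p hp
  have h1 : Th E p ∈ Syz f := hf _ (by rw [Phi_Th E f g hE, hp])
  have h2 : Th F (Th E p) ∈ Syz g := Ideal.mem_comap.1 (LinT.change_aux1 F hF h1)
  have h4 := LinT.change_aux3 ((Th F).comp (Th E)) (LinT.change_aux2 E F hE hF) p
  rw [AlgHom.comp_apply] at h4
  have := Ideal.sub_mem _ h2 h4
  rwa [sub_sub_cancel] at this

lemma LinT.change_span {f g : Fin k → B} (hf : LinT f) (h : Ideal.span (Set.range f) = Ideal.span (Set.range g)) :
    LinT g := by
  have h1 : ∀ j, ∃ E : Fin k → B, ∑ i, E i * f i = g j := fun j => by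
    apply Ideal.mem_span_range_iff_exists_fun.1
    rw [h]; exact Ideal.subset_span ⟨j, rfl⟩
  have h2 : ∀ j, ∃ E : Fin k → B, ∑ i, E i * g i = f j := fun j => by
    apply Ideal.mem_span_range_iff_exists_fun.1
    rw [← h]; exact Ideal.subset_span ⟨j, rfl⟩
  choose E hE using h1
  choose F hF using h2
  exact hf.change E F (fun j => (hE j).symm) (fun j => (hF j).symm)

lemma Phi_range (g : Fin k → B) : (Phi g).range = reesAlgebra (Ideal.span (Set.range g)) := by
  apply le_antisymm
  · rintro _ ⟨p, rfl⟩
    induction p using MvPolynomial.induction_on with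
    | C c =>
      change Phi g (algebraMap B _ c) ∈ _
      rw [AlgHom.commutes]; exact Subalgebra.algebraMap_mem _ _
    | add p q hp hq => simp only [map_add] at *; exact add_mem hp hq
    | mul_X p j hp =>
      simp only [map_mul] at *
      refine mul_mem hp ?_
      have : Phi g (MvPolynomial.X j) = (fX (Ideal.span (Set.range g)) (g j) (Ideal.subset_span ⟨j, rfl⟩)).1 := by
        simp [Phi, fX]

      rw [AlgHom.toRingHom_eq_coe, RingHom.coe_coe, this]
      exact Subtype.property _
  · rw [← adjoin_monomial_eq_reesAlgebra, Algebra.adjoin_le_iff]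
    rintro _ ⟨x, hx, rfl⟩
    obtain ⟨c, rfl⟩ := Ideal.mem_span_range_iff_exists_fun.1 hx
    refine ⟨lin c, ?_⟩

    rw [AlgHom.toRingHom_eq_coe, RingHom.coe_coe, Phi_lin, Polynomial.C_mul_X_eq_monomial]

lemma rees_GR {m n : ℕ} {g : ℕ → B} {A : Type} [CommRing A] [Algebra B A] {T : ℕ → A}
    {ρ : A →ₐ[B] Polynomial B} (H : Pre g (n + 1) A T ρ) (hA : GR A (m + 1))
    (hrel : ∀ p : ℕ → B, ∑ j ∈ Finset.range (n + 1), p j * g j = 0 →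
        ∑ j ∈ Finset.range (n + 1), algebraMap B A (p j) * T j = 0)
    (hLT : LinT (fun j : Fin (n + 1) => g j)) :
    GR (reesAlgebra (Ideal.span (Set.range (fun j : Fin (n + 1) => g j)))) (m + 1) := by
  set g' : Fin (n + 1) → B := fun j => g j with hg'
  let ψ : MvPolynomial (Fin (n + 1)) B →ₐ[B] A := MvPolynomial.aeval (fun j : Fin (n+1) => T j)
  have hψs : Function.Surjective ψ := by
    rw [← AlgHom.range_eq_top, eq_top_iff, ← H.h4, Algebra.adjoin_le_iff]
    rintro _ ⟨j, hj, rfl⟩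
    exact ⟨MvPolynomial.X ⟨j, hj⟩, by simp [ψ]⟩
  have hρψ : ρ.comp ψ = Phi g' := by
    apply MvPolynomial.algHom_ext
    intro j
    simp [ψ, Phi, H.h3 j j.2, hg']
  have hker : ∀ p, ψ p = 0 ↔ Phi g' p = 0 := by
    intro p
    constructor
    · intro h; rw [← hρψ, AlgHom.comp_apply, h, map_zero]
    · intro h
      have : Syz g' ≤ RingHom.ker ψ.toRingHom := by
        refine Ideal.span_le.2 ?_
        rintro _ ⟨q, hq, rfl⟩
        have h1 := hrel (fun j => if h : j < n + 1 then q ⟨j, h⟩ else 0) (by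
          rw [Finset.sum_range]
          refine Eq.trans ?_ hq
          refine Finset.sum_congr rfl fun j _ => ?_
          rw [dif_pos j.2])
        change ψ (lin q) = 0
        rw [Finset.sum_range] at h1
        refine Eq.trans ?_ h1
        simp only [ψ, lin, map_sum, map_mul, MvPolynomial.aeval_X, MvPolynomial.algHom_C]
        refine Finset.sum_congr rfl fun j _ => ?_
        rw [dif_pos j.2]
      exact this (hLT p h)
  have e1 : (MvPolynomial (Fin (n + 1)) B ⧸ RingHom.ker ψ.toRingHom) ≃+* A :=
    RingHom.quotientKerEquivOfSurjective (f := ψ.toRingHom) hψs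
  have e2 : (MvPolynomial (Fin (n + 1)) B ⧸ RingHom.ker (Phi g').rangeRestrict.toRingHom) ≃+* (Phi g').range :=
    RingHom.quotientKerEquivOfSurjective (f := (Phi g').rangeRestrict.toRingHom) (Phi g').rangeRestrict_surjective
  have hk : RingHom.ker ψ.toRingHom = RingHom.ker (Phi g').rangeRestrict.toRingHom := by
    ext p
    rw [RingHom.mem_ker, RingHom.mem_ker]
    refine (hker p).trans ?_
    rw [Subtype.ext_iff]; rfl
  rw [← Phi_range]
  exact hA.congr (e1.symm.trans ((Ideal.quotEquivOfEq hk).trans e2))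

end LinT

section Fin

lemma regSeq_height {R : Type} [CommRing R] {k : ℕ} (f : Fin k → R) (hf : IsRegSeq f) :
    ∀ i (hi : i ≤ k) (p : PrimeSpectrum R), (∀ j : Fin k, (j : ℕ) < i → f j ∈ p.asIdeal) →
      (i : ℕ∞) ≤ Order.height p := by
  intro i
  induction i with
  | zero => intro _ p _; simp
  | succ i ih =>
    intro hi p hp
    let ii : Fin k := ⟨i, hi⟩
    set J := Ideal.span (f '' {j | j < ii}) with hJ
    have hJp : J ≤ p.asIdeal := by
      refine Ideal.span_le.2 ?_
      rintro _ ⟨j, hj, rfl⟩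
      have : (j : ℕ) < i := hj
      exact hp j (by omega)
    obtain ⟨q, hq, hqp⟩ := Ideal.exists_minimalPrimes_le hJp
    have hqprime : q.IsPrime := hq.1.1
    have hJq : J ≤ q := hq.1.2
    have hfi : f ii ∉ q := by
      intro hmem
      have hq2 := hq
      rw [Ideal.minimalPrimes_eq_comap] at hq2
      obtain ⟨q', hq', hqq⟩ := hq2
      have hd := Ideal.disjoint_nonZeroDivisors_of_mem_minimalPrimes hq'
      rw [← hqq, Ideal.mem_comap] at hmem
      refine Set.disjoint_left.1 hd hmem ?_
      rw [SetLike.mem_coe, mem_nonZeroDivisors_iff_right]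
      intro x hx
      obtain ⟨x, rfl⟩ := Ideal.Quotient.mk_surjective x
      rw [← map_mul, Ideal.Quotient.eq_zero_iff_mem] at hx
      rw [Ideal.Quotient.eq_zero_iff_mem]
      exact hf.1 ii x hx
    have hlt : (⟨q, hqprime⟩ : PrimeSpectrum R) < p := by
      refine lt_of_le_of_ne hqp ?_
      rintro rfl
      exact hfi (hp ii (Nat.lt_succ_self i))
    have h1 := ih (by omega) ⟨q, hqprime⟩ (fun j hj => hJq (Ideal.subset_span ⟨j, hj, rfl⟩))
    calc ((i + 1 : ℕ) : ℕ∞) = (i : ℕ∞) + 1 := by push_cast; rfl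
      _ ≤ Order.height (⟨q, hqprime⟩ : PrimeSpectrum R) + 1 := by gcongr
      _ ≤ _ := Order.height_add_one_le hlt

lemma depthAt_le {R : Type} [CommRing R] (P : Ideal R) : depthAt P ≤ idealHeight P := by
  refine sSup_le ?_
  rintro _ ⟨k, g, rfl, hg, hreg⟩
  refine le_iInf₂ fun p hp => ?_
  exact regSeq_height g hreg k le_rfl p (fun j _ => hp (hg j))

lemma le_depthAt {R : Type} [CommRing R] {d : ℕ} (h : GR R d) (P : Ideal R) (hP : P.IsMaximal) :
    (d : ℕ∞) ≤ depthAt P := by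
  obtain ⟨rs, hl, hmem, hreg⟩ := h P hP
  refine le_sSup ⟨rs.length, fun i => rs[i], by rw [hl], fun i => hmem _ (List.getElem_mem _), ?_, ?_⟩
  · rw [RingTheory.Sequence.isWeaklyRegular_iff_Fin] at hreg
    intro i x hx
    have hs : Ideal.span ((fun i : Fin rs.length => rs[i]) '' {j | j < i}) = Ideal.ofList (rs.take i) := by
      rw [Ideal.ofList]
      congr 1
      ext y
      simp only [Set.mem_image, Set.mem_ofPred_eq]
      rw [List.mem_take_iff_getElem]
      constructor
      · rintro ⟨j, hj, rfl⟩
        exact ⟨j, by have := j.2; have : (j : ℕ) < i := hj; omega, rfl⟩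
      · rintro ⟨j, hj, rfl⟩
        exact ⟨⟨j, by omega⟩, by change j < (i : ℕ); omega, rfl⟩
    rw [hs] at hx ⊢
    have h1 := hreg i
    have htop : (Ideal.ofList (rs.take i) • ⊤ : Submodule R R) = Ideal.ofList (rs.take i) := by
      simp
    rw [htop] at h1
    have h2 := h1.right_eq_zero_of_smul (x := Submodule.Quotient.mk x) (by
      rw [← Submodule.Quotient.mk_smul, Submodule.Quotient.mk_eq_zero, smul_eq_mul, mul_comm]
      exact hx)
    rwa [Submodule.Quotient.mk_eq_zero] at h2
  · intro htop
    apply hP.ne_top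
    rw [eq_top_iff, ← htop]
    refine Ideal.span_le.2 ?_
    rintro _ ⟨i, rfl⟩
    exact hmem _ (List.getElem_mem _)

lemma krullDim_le_of_int {R S : Type} [CommRing R] [CommRing S] [Algebra R S] [Algebra.IsIntegral R S] :
    ringKrullDim S ≤ ringKrullDim R := by
  refine Order.krullDim_le_of_strictMono (PrimeSpectrum.comap (algebraMap R S)) ?_
  intro p q hpq
  exact Ideal.IsIntegral.comap_lt_comap (I := p.asIdeal) (J := q.asIdeal) hpq

lemma mv_dim (K : Type) [Field K] (m : ℕ) : ringKrullDim (MvPolynomial (Fin m) K) = m := by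
  rw [MvPolynomial.ringKrullDim_of_isNoetherianRing, ringKrullDim_eq_zero_of_field]; simp

lemma trdeg_Bt (K : Type) [Field K] (m : ℕ) :
    Algebra.trdeg K (Polynomial (MvPolynomial (Fin m) K)) = (m : Cardinal) + 1 := by
  rw [← trdeg_add_eq K (MvPolynomial (Fin m) K), MvPolynomial.trdeg_of_isDomain, Polynomial.trdeg_of_isDomain]
  simp

lemma rees_dim (K : Type) [Field K] (m : ℕ) (I : Ideal (MvPolynomial (Fin m) K)) :
    ringKrullDim (reesAlgebra I) ≤ (m + 1 : ℕ) := by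
  have : Algebra.FiniteType K (reesAlgebra I) :=
    Algebra.FiniteType.trans (S := MvPolynomial (Fin m) K) inferInstance inferInstance
  obtain ⟨s, g, hg, hint⟩ := exists_integral_inj_algHom_of_fg K (reesAlgebra I)
  have hs : s ≤ m + 1 := by
    have h1 := trdeg_le_of_injective (((reesAlgebra I).val.restrictScalars K).comp g)
      (Subtype.val_injective.comp hg)
    rw [trdeg_Bt, MvPolynomial.trdeg_of_isDomain] at h1
    simp only [Cardinal.mk_fin, Cardinal.lift_natCast, Cardinal.lift_id] at h1
    exact_mod_cast h1
  let : Algebra (MvPolynomial (Fin s) K) (reesAlgebra I) := g.toRingHom.toAlgebra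
  have : Algebra.IsIntegral (MvPolynomial (Fin s) K) (reesAlgebra I) := ⟨hint⟩
  refine (krullDim_le_of_int (R := MvPolynomial (Fin s) K)).trans ?_
  rw [mv_dim]
  exact_mod_cast hs

lemma height_le_dim {R : Type} [CommRing R] {d : ℕ} (h : ringKrullDim R ≤ (d : ℕ)) (p : PrimeSpectrum R) :
    Order.height p ≤ (d : ℕ∞) := by
  have := (Order.height_le_krullDim p).trans h
  exact_mod_cast this


lemma aI_fin {B : Type} [CommRing B] (g : ℕ → B) (k : ℕ) :
    aI g k = Ideal.span (Set.range (fun j : Fin k => g j)) := by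
  rw [aI]
  congr 1
  ext y
  constructor
  · rintro ⟨j, hj, rfl⟩; exact ⟨⟨j, hj⟩, rfl⟩
  · rintro ⟨j, rfl⟩; exact ⟨j, j.2, rfl⟩

lemma exists_prime_of_height {R : Type} [CommRing R] {I : Ideal R} {n : ℕ}
    (h : idealHeight I = (n : ℕ∞)) : ∃ p : PrimeSpectrum R, I ≤ p.asIdeal ∧ Order.height p ≤ n := by
  by_contra hc
  push Not at hc
  have : ((n + 1 : ℕ) : ℕ∞) ≤ idealHeight I := by
    refine le_iInf₂ fun p hp => ?_
    have := hc p hp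
    push_cast
    exact Order.add_one_le_of_lt this
  rw [h] at this
  have := Nat.cast_le.1 this
  omega

end Fin

theorem reesAlgebra_isCM (K : Type) [Field K] (m n : ℕ)
    (I : Ideal (MvPolynomial (Fin m) K))
    (f : Fin (n + 1) → MvPolynomial (Fin m) K) (hf : ∀ j, f j ∈ I)
    (hI : I = Ideal.span (Set.range f))
    (hhomog : ∀ j, ∃ dj : ℕ, f j ∈ MvPolynomial.homogeneousSubmodule (Fin m) K dj)
    (hmu : minGens I = n + 1) (hht : idealHeight I = (n : ℕ∞))
    (hlt : IsLinearTypePres (reesStructureMap I f hf))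
    (hpd : projDim (MvPolynomial (Fin m) K) (MvPolynomial (Fin m) K ⧸ I) = (n : ℕ∞)) :
    IsCMRing (reesAlgebra I) := by
  have hG := GR.mvPoly K m
  have hdim := (mv_dim K m).le
  obtain ⟨p, hIp, hp⟩ := exists_prime_of_height hht
  have hn0 : 0 < n := by
    rcases Nat.eq_zero_or_pos n with rfl | h
    · exfalso
      have hmin : IsMin p := by
        rw [← Order.height_eq_zero]
        exact le_antisymm (by simpa using hp) bot_le
      have hbot : p.asIdeal ≤ ⊥ := hmin (b := (⟨⊥, Ideal.isPrime_bot⟩ : PrimeSpectrum _)) bot_le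
      have hI0 : I = ⊥ := le_bot_iff.1 (hIp.trans hbot)
      have : minGens I ≤ 0 := Nat.sInf_le ⟨Fin.elim0, by simp [hI0]⟩
      omega
    · exact h
  have hn : n ≤ m := by
    have h1 : (n : ℕ∞) ≤ Order.height p := by
      rw [← hht]; exact iInf₂_le p hIp
    exact_mod_cast h1.trans (height_le_dim hdim p)
  obtain ⟨g, hg, hreg⟩ := selection hG hn hdim I hht.ge
    (fun j => if h : j < n + 1 then f ⟨j, h⟩ else 0) (by
      rw [aI_fin, hI]
      congr 2
      funext j
      exact dif_pos j.2) n le_rfl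
  obtain ⟨A, _, _, T, ρ, H, hA, hrel⟩ := final_alg hG hn hn0 hreg (by
    intro P hP
    rw [hg]
    exact projDim_dp hG hpd hn P hP)
  have hspan : I = Ideal.span (Set.range (fun j : Fin (n + 1) => g j)) := by rw [← hg, aI_fin]
  have hL : LinT (fun j : Fin (n + 1) => g j) := (lt_of_pres I f hf hlt).change_span (by
    rw [← hI, hspan])
  have hR : GR (reesAlgebra I) (m + 1) := by
    have := rees_GR H hA hrel hL
    rwa [← hspan] at this
  intro P hP
  refine le_antisymm (depthAt_le P) (le_trans ?_ (le_depthAt hR P hP))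
  have hP' : P.IsPrime := hP.isPrime
  exact (iInf₂_le (⟨P, hP'⟩ : PrimeSpectrum _) le_rfl).trans (height_le_dim (rees_dim K m I) _)
end

section
/- Let X be the order-t skew-symmetric matrix of indeterminates whose upper-left 3×3 block is zero (entries x_{ij} for 1 ≤ i < j ≤ t except x_{12} = x_{13} = x_{23} = 0). For odd t ≥ 5, the Pfaffians Pf_{123̄}(X), Pf_{1̄}(X), Pf_{2̄}(X), Pf_{3̄}(X) form a d-sequence in K[X] such that Pf_{123̄}(X), Pf_{1̄}(X), Pf_{2̄}(X) is a regular sequence. -/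
open Ideal

/-- A sequence is a d-sequence if `(⟨f_0,…,f_{i-1}⟩ : f_i) ∩ ⟨f⟩ = ⟨f_0,…,f_{i-1}⟩`. -/
def IsDSequence {A : Type*} [CommRing A] {n : ℕ} (f : Fin n → A) : Prop :=
  ∀ i : Fin n,
    (Ideal.span (f '' {j | j < i})).colon (Ideal.span {f i}) ⊓ Ideal.span (Set.range f)
      = Ideal.span (f '' {j | j < i})

/-- The Pfaffian of an `n × n` matrix, defined by the recursive expansion along the
first row: `pf(M) = ∑_j (-1)^j M 0 (j+1) · pf(M with rows/columns 0 and j+1 deleted)`,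
with `pf = 1` in size `0` and `pf = 0` in odd sizes. -/
def pfaffian {R : Type*} [CommRing R] : (n : ℕ) → Matrix (Fin n) (Fin n) R → R
  | 0, _ => 1
  | 1, _ => 0
  | (n + 2), M =>
      ∑ j : Fin (n + 1), (-1 : R) ^ (j : ℕ) * M 0 j.succ *
        pfaffian n (M.submatrix (fun k => (j.succAbove k).succ)
          (fun k => (j.succAbove k).succ))

/-- The variables of the skew-symmetric matrix `X`: pairs `(i,j)` with `i < j` and
`j ≥ 3` (the upper-left `3 × 3` block being zero). -/
def PairVar (t : ℕ) : Type := {p : Fin t × Fin t // (p.1 : ℕ) < (p.2 : ℕ) ∧ 3 ≤ (p.2 : ℕ)}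

/-- The generic order-`t` skew-symmetric matrix with zero upper-left `3 × 3` block. -/
noncomputable def Xmat (K : Type) [Field K] (t : ℕ) :
    Matrix (Fin t) (Fin t) (MvPolynomial (PairVar t) K) := fun i j =>
  if h : (i : ℕ) < (j : ℕ) ∧ 3 ≤ (j : ℕ) then MvPolynomial.X ⟨(i, j), h⟩
  else if h' : (j : ℕ) < (i : ℕ) ∧ 3 ≤ (i : ℕ) then - MvPolynomial.X ⟨(j, i), h'⟩
  else 0

/-- The order embedding `Fin n → Fin (n+1)` skipping the index `a`. -/
def emb1 (a : ℕ) {n : ℕ} (k : Fin n) : Fin (n + 1) :=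
  ⟨if (k : ℕ) < a then (k : ℕ) else (k : ℕ) + 1, by have := k.2; split_ifs <;> omega⟩

/-- The order embedding `Fin n → Fin (n+2)` skipping the indices `a < b`. -/
def emb2 (a b : ℕ) {n : ℕ} (k : Fin n) : Fin (n + 2) :=
  ⟨if (k : ℕ) < a then (k : ℕ) else if (k : ℕ) + 1 < b then (k : ℕ) + 1 else (k : ℕ) + 2,
   by have := k.2; split_ifs <;> omega⟩

/-- The order embedding `Fin n → Fin (n+3)` skipping the indices `0, 1, 2`. -/
def emb3 {n : ℕ} (k : Fin n) : Fin (n + 3) := ⟨(k : ℕ) + 3, by have := k.2; omega⟩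


open CliffordAlgebra in
theorem contract_list {R M : Type*} [CommRing R] [AddCommGroup M] [Module R M]
    (Q : QuadraticForm R M) (d : Module.Dual R M) (v : ℕ → M) (l : List ℕ) :
    contractLeft d ((l.map (fun i => ι Q (v i))).prod) =
      ∑ j : Fin l.length, ((-1 : R) ^ (j : ℕ) * d (v l[j])) •
        ((l.eraseIdx j).map (fun i => ι Q (v i))).prod := by
  induction l with
  | nil => simp
  | cons a l ih =>
    rw [List.map_cons, List.prod_cons, contractLeft_ι_mul, ih]
    refine Eq.trans ?_ (Fin.sum_univ_succ _).symm
    rw [Finset.mul_sum, sub_eq_add_neg, ← Finset.sum_neg_distrib]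
    congr 1
    · simp
    · refine Finset.sum_congr rfl fun j _ => ?_
      simp [pow_succ]

structure PfSys {R : Type*} [CommRing R] (x : ℕ → ℕ → R) (F : List ℕ → R) : Prop where
  skew : ∀ i j, x i j = - x j i
  nil : F [] = 1
  cons : ∀ a l, F (a :: l) = ∑ j : Fin l.length, (-1 : R) ^ (j : ℕ) * x a l[j] * F (l.eraseIdx j)
  perm : ∀ l l', l.Perm l' → F l = F l' ∨ F l = - F l'
  mem : ∀ a l, a ∈ l → F (a :: l) = 0

open CliffordAlgebra in
theorem exists_pfSys {R : Type*} [CommRing R] (x : ℕ → ℕ → R) (hd : ∀ i, x i i = 0)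
    (hs : ∀ i j, x i j = - x j i) : ∃ F, PfSys x F := by
  let B : LinearMap.BilinForm R (ℕ →₀ R) :=
    Finsupp.linearCombination R (fun i => Finsupp.linearCombination R (fun j => - x i j))
  have hB : ∀ i j, B (Finsupp.single i 1) (Finsupp.single j 1) = - x i j := by
    intro i j; simp [B]
  have hBs : ∀ u w, B u w = - B w u := by
    have : B = - B.flip := by
      ext i j
      simp [hB]
      rw [hs i j]; simp
    intro u w
    conv_lhs => rw [this]
    simp
  have hBa : ∀ u, B u u = 0 := by
    intro u
    induction u using Finsupp.induction_linear with
    | zero => simp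
    | add f g hf hg =>
      have := hBs f g
      simp only [map_add, LinearMap.add_apply, hf, hg, this]; ring
    | single i r => simp [B, hd]
  have h : B.toQuadraticMap = (0 : QuadraticForm R (ℕ →₀ R)) - 0 := by
    ext u; simp [hBa]
  let v : ℕ → (ℕ →₀ R) := fun i => Finsupp.single i 1
  let P : List ℕ → CliffordAlgebra (0 : QuadraticForm R (ℕ →₀ R)) :=
    fun l => (l.map (fun i => ι 0 (v i))).prod
  let ε : CliffordAlgebra (0 : QuadraticForm R (ℕ →₀ R)) →ₐ[R] R := ExteriorAlgebra.algebraMapInv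
  have hε : ∀ m, ε (ι 0 m) = 0 := by
    intro m
    simp only [ε, ExteriorAlgebra.algebraMapInv]
    erw [ExteriorAlgebra.lift_ι_apply]
    simp
  have hperm : ∀ l l', l.Perm l' → P l = P l' ∨ P l = - P l' := by
    intro l l' hl
    induction hl with
    | nil => simp
    | cons a _ ih => rcases ih with ih | ih <;> simp [P] at ih ⊢ <;> simp [ih]
    | swap a b l =>
      right
      simp only [P, List.map_cons, List.prod_cons, ← mul_assoc]
      rw [← neg_mul]
      congr 1
      have := ι_mul_ι_add_swap (Q := (0 : QuadraticForm R (ℕ →₀ R))) (v b) (v a)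
      rw [QuadraticMap.polar] at this
      simp only [zero_apply, sub_zero, map_zero] at this
      exact eq_neg_of_add_eq_zero_left this
    | trans _ _ h1 h2 =>
      rcases h1 with h1 | h1 <;> rcases h2 with h2 | h2 <;> simp [h1, h2]
  refine ⟨fun l => ε (changeForm h (P l)), hs, by simp [P], ?_, ?_, ?_⟩
  · intro a l
    simp only [P, List.map_cons, List.prod_cons]
    rw [changeForm_ι_mul, map_sub, map_mul, hε, ← changeForm_contractLeft, contract_list]
    simp only [map_sum, zero_mul, zero_sub, ← Finset.sum_neg_distrib, v, hB, map_smul]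
    refine Finset.sum_congr rfl fun j _ => ?_
    simp
  · intro l l' hl
    rcases hperm l l' hl with h | h <;> simp [h]
  · intro a l hl
    have h1 : P (a :: l) = 0 := by
      have h2 := hperm _ _ ((List.perm_cons_erase hl).cons a)
      have h3 : P (a :: a :: l.erase a) = 0 := by
        simp [P, ← mul_assoc]
      simpa [h3] using h2
    simp [h1]

theorem PfSys.plucker {R : Type*} [CommRing R] {x : ℕ → ℕ → R} {F : List ℕ → R} (h : PfSys x F)
    (A B : List ℕ) :
    ∑ i : Fin A.length, (-1 : R) ^ (i : ℕ) * F (A.eraseIdx i) * F (A[i] :: B) =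
    - ∑ j : Fin B.length, (-1 : R) ^ (j : ℕ) * F (B.eraseIdx j) * F (B[j] :: A) := by
  simp only [h.cons, Finset.mul_sum, ← Finset.sum_neg_distrib]
  rw [Finset.sum_comm]
  refine Finset.sum_congr rfl fun j _ => Finset.sum_congr rfl fun i _ => ?_
  rw [h.skew (A[i]) (B[j])]
  ring

theorem PfSys.rel1 {R : Type*} [CommRing R] {x : ℕ → ℕ → R} {F : List ℕ → R} (h : PfSys x F)
    (a b c d : ℕ) (U : List ℕ) :
    F U * F (a :: b :: c :: d :: U) = - (F (c :: d :: U) * F (b :: a :: U)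
      - F (b :: d :: U) * F (c :: a :: U) + F (b :: c :: U) * F (d :: a :: U)) := by
  have := h.plucker (a :: U) (b :: c :: d :: U)
  simp only [List.length_cons, Fin.sum_univ_succ] at this
  rw [Finset.sum_eq_zero, Finset.sum_eq_zero (s := Finset.univ (α := Fin U.length))] at this
  · simp only [Fin.val_succ, Fin.val_zero, List.eraseIdx_cons_succ, List.eraseIdx_cons_zero,
      List.getElem_cons_succ, List.getElem_cons_zero, Fin.getElem_fin] at this
    linear_combination this
  · intro i _
    rw [h.mem _ (a :: U)]
    · simp
    · simp
  · intro i _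
    rw [h.mem _ (b :: c :: d :: U)]
    · simp
    · simp

theorem PfSys.rel2 {R : Type*} [CommRing R] {x : ℕ → ℕ → R} {F : List ℕ → R} (h : PfSys x F)
    (a b c e : ℕ) (U : List ℕ) :
    F (b :: c :: e :: U) * F (a :: U) - F (a :: c :: e :: U) * F (b :: U)
      + F (a :: b :: e :: U) * F (c :: U) - F (a :: b :: c :: U) * F (e :: U) = 0 := by
  have := h.plucker U (a :: b :: c :: e :: U)
  simp only [List.length_cons, Fin.sum_univ_succ] at this
  rw [Finset.sum_eq_zero, Finset.sum_eq_zero (s := Finset.univ (α := Fin U.length))] at this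
  · simp only [Fin.val_succ, Fin.val_zero, List.eraseIdx_cons_succ, List.eraseIdx_cons_zero,
      List.getElem_cons_succ, List.getElem_cons_zero, Fin.getElem_fin] at this
    linear_combination this
  · intro i _
    rw [h.mem _ U]
    · simp
    · simp
  · intro i _
    rw [h.mem _ (a :: b :: c :: e :: U)]
    · simp
    · simp

open MvPolynomial in
structure GB {σ K : Type*} [Field K] (m : MonomialOrder σ) (J : Ideal (MvPolynomial σ K))
    (S : Set (σ →₀ ℕ)) : Prop where
  lead : ∀ h ∈ J, h ≠ 0 → ∃ s ∈ S, s ≤ m.degree h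
  elt : ∀ s ∈ S, s ≠ 0 ∧ ∃ b ∈ J, b ≠ 0 ∧ m.degree b = s

theorem GB.bot {σ K : Type*} [Field K] (m : MonomialOrder σ) :
    GB m (⊥ : Ideal (MvPolynomial σ K)) ∅ :=
  ⟨fun h hh h0 => absurd (by simpa using hh) h0, fun s hs => absurd hs (by simp)⟩

theorem GB.normal {σ K : Type*} [Field K] {m : MonomialOrder σ} {J : Ideal (MvPolynomial σ K)}
    {S : Set (σ →₀ ℕ)} (h : GB m J S) (a : MvPolynomial σ K) :
    ∃ r, a - r ∈ J ∧ (r ≠ 0 → ∀ s ∈ S, ¬ s ≤ m.degree r) := by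
  let T : Set m.syn := (fun r => m.toSyn (m.degree r)) '' {r | a - r ∈ J}
  obtain ⟨t, ⟨r, hr, rfl⟩, hmin⟩ := WellFounded.has_min (wellFounded_lt (α := m.syn)) T
    ⟨_, a, by simp, rfl⟩
  refine ⟨r, hr, fun hr0 s hs hle => ?_⟩
  obtain ⟨hs0, b, hb, hb0, rfl⟩ := h.elt s hs
  have hu : IsUnit (m.leadingCoeff b) := by
    rw [isUnit_iff_ne_zero]; exact m.leadingCoeff_ne_zero_iff.mpr hb0
  have hd : m.degree r ≠ 0 := by
    intro h0
    rw [h0] at hle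
    exact hs0 (le_antisymm hle (zero_le))
  refine hmin (m.toSyn (m.degree (m.reduce hu r))) ⟨_, ?_, rfl⟩ (m.degree_reduce_lt hu hle hd)
  simp only [Set.mem_ofPred_eq, MonomialOrder.reduce] at hr ⊢
  rw [← sub_add]
  exact J.add_mem hr (J.mul_mem_left _ hb)

theorem le_of_le_add_disj {σ : Type*} {s a d : σ →₀ ℕ} (h : s ≤ a + d)
    (hd : Disjoint s.support d.support) : s ≤ a := by
  intro i
  by_cases hi : s i = 0
  · simp [hi]
  · have : d i = 0 := by
      by_contra hc
      exact Finset.disjoint_left.mp hd (Finsupp.mem_support_iff.mpr hi)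
        (Finsupp.mem_support_iff.mpr hc)
    have := h i
    simp_all

theorem GB.regular {σ K : Type*} [Field K] {m : MonomialOrder σ} {J : Ideal (MvPolynomial σ K)}
    {S : Set (σ →₀ ℕ)} (h : GB m J S) {f : MvPolynomial σ K} (hf : f ≠ 0)
    (hS : ∀ s ∈ S, Disjoint s.support (m.degree f).support) (a : MvPolynomial σ K)
    (ha : a * f ∈ J) : a ∈ J := by
  obtain ⟨r, hr, hr2⟩ := h.normal a
  by_cases h0 : r = 0
  · simpa [h0] using hr
  · exfalso
    have h1 : r * f ∈ J := by
      have : r * f = a * f - (a - r) * f := by ring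
      rw [this]
      exact J.sub_mem ha (J.mul_mem_right _ hr)
    obtain ⟨s, hs, hle⟩ := h.lead _ h1 (mul_ne_zero h0 hf)
    rw [m.degree_mul h0 hf] at hle
    exact hr2 h0 s hs (le_of_le_add_disj hle (hS s hs))

theorem GB.step {σ K : Type*} [Field K] {m : MonomialOrder σ} {J : Ideal (MvPolynomial σ K)}
    {S : Set (σ →₀ ℕ)} (h : GB m J S) {f : MvPolynomial σ K} (hf : f ≠ 0)
    (hS : ∀ s ∈ S, Disjoint s.support (m.degree f).support) (hd : m.degree f ≠ 0) :
    GB m (J ⊔ Ideal.span {f}) (insert (m.degree f) S) := by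
  constructor
  · intro p hp hp0
    obtain ⟨j, hj, b, hb, rfl⟩ := Submodule.mem_sup.mp hp
    obtain ⟨a, rfl⟩ := Ideal.mem_span_singleton'.mp hb
    obtain ⟨r, hr, hr2⟩ := h.normal a
    have e : j + a * f = (j + (a - r) * f) + r * f := by ring
    have hj' : j + (a - r) * f ∈ J := J.add_mem hj (J.mul_mem_right _ hr)
    rw [e] at hp0 ⊢
    generalize j + (a - r) * f = j' at hj' hp0 ⊢
    by_cases h0 : r = 0
    · subst h0
      simp only [zero_mul, add_zero] at hp0 ⊢
      obtain ⟨s, hs, hle⟩ := h.lead _ hj' hp0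
      exact ⟨s, Set.mem_insert_of_mem _ hs, hle⟩
    by_cases hj0 : j' = 0
    · subst hj0
      refine ⟨_, Set.mem_insert _ _, ?_⟩
      rw [zero_add, m.degree_mul h0 hf]
      exact le_add_self
    obtain ⟨s, hs, hle⟩ := h.lead _ hj' hj0
    rcases lt_trichotomy (m.toSyn (m.degree j')) (m.toSyn (m.degree (r * f))) with hlt | heq | hlt
    · refine ⟨_, Set.mem_insert _ _, ?_⟩
      rw [m.degree_add_eq_right_of_lt hlt, m.degree_mul h0 hf]
      exact le_add_self
    · exfalso
      have := m.toSyn.injective heq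
      rw [this, m.degree_mul h0 hf] at hle
      exact hr2 h0 s hs (le_of_le_add_disj hle (hS s hs))
    · refine ⟨s, Set.mem_insert_of_mem _ hs, ?_⟩
      rwa [m.degree_add_of_lt hlt]
  · intro s hs
    rcases hs with rfl | hs
    · exact ⟨hd, f, Ideal.mem_sup_right (Ideal.mem_span_singleton_self f), hf, rfl⟩
    · obtain ⟨h0, b, hb, hb'⟩ := h.elt s hs
      exact ⟨h0, b, Ideal.mem_sup_left hb, hb'⟩

theorem eraseIdx_ofFn' {n : ℕ} (w : Fin (n + 1) → ℕ) (j : Fin (n + 1)) :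
    (List.ofFn w).eraseIdx j = List.ofFn (fun k => w (j.succAbove k)) := by
  apply List.ext_getElem
  · simp [List.length_eraseIdx]; omega
  · intro i h1 h2
    rw [List.getElem_eraseIdx]
    simp only [List.getElem_ofFn]
    simp only [List.length_ofFn] at h2
    split_ifs with h
    · congr 1
      rw [Fin.succAbove_of_castSucc_lt]
      · rfl
      · exact h
    · congr 1
      rw [Fin.succAbove_of_le_castSucc]
      · rfl
      · rw [Fin.le_def]; simp; omega

theorem pfaffian_eq {R : Type*} [CommRing R] {x : ℕ → ℕ → R} {F : List ℕ → R} (h : PfSys x F) :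
    ∀ (n : ℕ) (u : Fin n → ℕ) (M : Matrix (Fin n) (Fin n) R), (∀ i j, M i j = x (u i) (u j)) →
      pfaffian n M = F (List.ofFn u)
  | 0, u, M, _ => by simp [pfaffian, h.nil]
  | 1, u, M, _ => by simp [pfaffian, h.cons]
  | n + 2, u, M, hM => by
    rw [pfaffian, List.ofFn_succ, h.cons]
    rw [← (finCongr (List.length_ofFn (f := fun i : Fin (n + 1) => u i.succ)).symm).sum_comp]
    refine Finset.sum_congr rfl fun j _ => ?_
    have ih := pfaffian_eq h n (fun k => u ((j.succAbove k).succ))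
      (M.submatrix (fun k => (j.succAbove k).succ) (fun k => (j.succAbove k).succ))
      (fun a b => hM _ _)
    simp only [finCongr_apply, Fin.val_cast, Fin.getElem_fin, List.getElem_ofFn]
    rw [eraseIdx_ofFn' (fun i => u i.succ) j, ← ih, hM]

def flatP (M : List (ℕ × ℕ)) : List ℕ := M.flatMap (fun p => [p.1, p.2])

theorem PfSys.mem_sub {R K : Type*} [CommRing K] [CommRing R] [Algebra K R] {x : ℕ → ℕ → R}
    {F : List ℕ → R} (h : PfSys x F) (A : Subalgebra K R) :
    ∀ (n : ℕ) (l : List ℕ), l.length = n → (∀ a ∈ l, ∀ b ∈ l, x a b ∈ A) → F l ∈ A := by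
  intro n
  induction n using Nat.strong_induction_on with
  | _ n ih =>
    intro l hl hx
    cases l with
    | nil => rw [h.nil]; exact A.one_mem
    | cons a l =>
      rw [h.cons]
      refine A.sum_mem fun j _ => A.mul_mem (A.mul_mem ?_ ?_) ?_
      · exact A.pow_mem (A.neg_mem A.one_mem) _
      · exact hx _ (by simp) _ (by simp)
      · refine ih _ ?_ _ rfl ?_
        · rw [List.length_eraseIdx, if_pos j.2, ← hl]; simp
        · intro b hb c hc
          exact hx _ (List.mem_cons_of_mem _ (List.mem_of_mem_eraseIdx hb)) _
            (List.mem_cons_of_mem _ (List.mem_of_mem_eraseIdx hc))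

open MvPolynomial in
theorem lead_step {σ K : Type*} [Field K] [LinearOrder σ] [WellFoundedGT σ]
    {x : ℕ → ℕ → MvPolynomial σ K} {F : List ℕ → MvPolynomial σ K} (h : PfSys x F)
    (v w : ℕ) (l : List ℕ) (e : σ) (he : x v w = X e ∨ x v w = - X e)
    (h1 : ∀ b ∈ l, x v b ∈ supported K {s | e < s})
    (h2 : ∀ a ∈ w :: l, ∀ b ∈ w :: l, x a b ∈ supported K {s | e < s})
    (hl : F l ≠ 0) :
    F (v :: w :: l) ≠ 0 ∧ (MonomialOrder.lex (σ := σ)).degree (F (v :: w :: l)) =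
      Finsupp.single e 1 + (MonomialOrder.lex (σ := σ)).degree (F l) := by
  set m := MonomialOrder.lex (σ := σ) with hm
  set A := supported K {s | e < s} with hA
  obtain ⟨rest, hrA, hr⟩ : ∃ rest ∈ A, F (v :: w :: l) = x v w * F l + rest := by
    rw [h.cons]
    refine ⟨_, ?_, (Fin.sum_univ_succ _).trans (congrArg₂ (· + ·) ?_ rfl)⟩
    · refine A.sum_mem fun j _ => A.mul_mem (A.mul_mem ?_ ?_) ?_
      · exact A.pow_mem (A.neg_mem A.one_mem) _
      · exact h1 _ (by simp)
      · refine h.mem_sub A _ _ rfl ?_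
        intro b hb c hc
        exact h2 _ (List.mem_of_mem_eraseIdx hb) _ (List.mem_of_mem_eraseIdx hc)
    · simp
  have hlA : F l ∈ A := h.mem_sub A _ _ rfl fun a ha b hb =>
    h2 a (List.mem_cons_of_mem _ ha) b (List.mem_cons_of_mem _ hb)
  have hsup : ∀ f ∈ A, ∀ d ∈ f.support, ∀ s, s ≤ e → d s = 0 := by
    intro f hf d hd s hs
    by_contra hc
    have : s ∈ f.vars := by
      rw [mem_vars_iff_mem_support]; exact ⟨d, hd, Finsupp.mem_support_iff.mpr hc⟩
    have := (mem_supported.mp hf) this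
    exact absurd hs (not_le.mpr this)
  have hxe : x v w ≠ 0 ∧ m.degree (x v w) = Finsupp.single e 1 := by
    rcases he with he | he <;> rw [he]
    · exact ⟨X_ne_zero e, m.degree_X⟩
    · exact ⟨neg_ne_zero.mpr (X_ne_zero e), by rw [m.degree_neg, m.degree_X]⟩
  have hdm : m.degree (x v w * F l) = Finsupp.single e 1 + m.degree (F l) := by
    rw [m.degree_mul hxe.1 hl, hxe.2]
  have key : ∀ d ∈ rest.support, m.toSyn d < m.toSyn (Finsupp.single e 1 + m.degree (F l)) := by
    intro d hd
    have h3 := hsup _ hrA d hd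
    have h4 := hsup _ hlA _ (m.degree_mem_support hl)
    change toLex d < toLex (Finsupp.single e 1 + m.degree (F l))
    rw [Finsupp.Lex.lt_iff]
    refine ⟨e, fun s hs => ?_, ?_⟩
    · have := h3 s hs.le
      have := h4 s hs.le
      simp_all [hs.ne']
    · have := h3 e le_rfl
      simp_all
  have hlt : m.toSyn (m.degree rest) < m.toSyn (m.degree (x v w * F l)) := by
    rw [hdm]
    by_cases h0 : rest = 0
    · rw [h0, m.degree_zero]
      rw [map_zero, m.toSyn_lt_iff_ne_zero]
      intro hc
      rw [← map_zero m.toSyn] at hc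
      replace hc := m.toSyn.injective hc
      have := DFunLike.congr_fun hc e
      simp at this
    · exact key _ (m.degree_mem_support h0)
  have hdeg : m.degree (F (v :: w :: l)) = Finsupp.single e 1 + m.degree (F l) := by
    rw [hr, m.degree_add_of_lt hlt, hdm]
  refine ⟨?_, hdeg⟩
  apply m.ne_zero_of_degree_ne_zero
  rw [hdeg]
  intro hc
  have := DFunLike.congr_fun hc e
  simp at this

noncomputable def xn (K : Type) [Field K] (t : ℕ) (i j : ℕ) : MvPolynomial (PairVar t) K :=
  if h : i < t ∧ j < t then Xmat K t ⟨i, h.1⟩ ⟨j, h.2⟩ else 0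

theorem xn_skew (K : Type) [Field K] (t i j : ℕ) : xn K t i j = - xn K t j i := by
  unfold xn Xmat
  by_cases h : i < t ∧ j < t
  · rw [dif_pos h, dif_pos h.symm]
    by_cases h1 : i < j ∧ 3 ≤ j
    · have h2 : ¬ (j < i ∧ 3 ≤ i) := by omega
      simp [h1, h2]
    · by_cases h2 : j < i ∧ 3 ≤ i
      · simp [h1, h2]
      · simp [h1, h2]
  · rw [dif_neg h, dif_neg (by tauto)]; simp

theorem xn_var (K : Type) [Field K] (t a b : ℕ) (ha : a < t) (hb : b < t) (hab : a ≠ b)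
    (h3 : 3 ≤ a ∨ 3 ≤ b) : ∃ s : PairVar t,
      (((s.1.1 : ℕ) = a ∧ (s.1.2 : ℕ) = b) ∨ ((s.1.1 : ℕ) = b ∧ (s.1.2 : ℕ) = a)) ∧
      (xn K t a b = MvPolynomial.X s ∨ xn K t a b = - MvPolynomial.X s) := by
  unfold xn Xmat
  rw [dif_pos ⟨ha, hb⟩]
  by_cases h1 : a < b ∧ 3 ≤ b
  · exact ⟨⟨(⟨a, ha⟩, ⟨b, hb⟩), h1⟩, by simp, by simp [h1]⟩
  · have h2 : b < a ∧ 3 ≤ a := by omega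
    exact ⟨⟨(⟨b, hb⟩, ⟨a, ha⟩), h2⟩, by simp, by simp [h1, h2]⟩

theorem xn_cases (K : Type) [Field K] (t a b : ℕ) : xn K t a b = 0 ∨ (a ≠ b ∧ ∃ s : PairVar t,
      (((s.1.1 : ℕ) = a ∧ (s.1.2 : ℕ) = b) ∨ ((s.1.1 : ℕ) = b ∧ (s.1.2 : ℕ) = a)) ∧
      (xn K t a b = MvPolynomial.X s ∨ xn K t a b = - MvPolynomial.X s)) := by
  by_cases h : a < t ∧ b < t ∧ a ≠ b ∧ (3 ≤ a ∨ 3 ≤ b)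
  · exact Or.inr ⟨h.2.2.1, xn_var K t a b h.1 h.2.1 h.2.2.1 h.2.2.2⟩
  · left
    unfold xn Xmat
    split_ifs with h1 h2 h3
    · simp at h2; omega
    · simp at h3; omega
    · rfl
    · rfl

theorem xn_self (K : Type) [Field K] (t i : ℕ) : xn K t i i = 0 := by
  rcases xn_cases K t i i with h | ⟨h, _⟩
  · exact h
  · exact absurd rfl h

def pvKey (num : ℕ → ℕ) (t : ℕ) (s : PairVar t) : ℕ ×ₗ (ℕᵒᵈ ×ₗ (ℕ ×ₗ ℕ)) :=
  toLex (min (num s.1.1) (num s.1.2), toLex (OrderDual.toDual (max (num s.1.1) (num s.1.2)),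
    toLex ((s.1.1 : ℕ), (s.1.2 : ℕ))))

theorem pvKey_inj (num : ℕ → ℕ) (t : ℕ) : Function.Injective (pvKey num t) := by
  intro s s' h
  simp only [pvKey, EmbeddingLike.apply_eq_iff_eq, Prod.mk.injEq] at h
  apply Subtype.ext
  apply Prod.ext
  · exact Fin.ext h.2.2.1
  · exact Fin.ext h.2.2.2

noncomputable def pvOrder (num : ℕ → ℕ) (t : ℕ) : LinearOrder (PairVar t) :=
  LinearOrder.lift' (pvKey num t) (pvKey_inj num t)

instance (t : ℕ) : Finite (PairVar t) := by unfold PairVar; infer_instance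

noncomputable def mo (num : ℕ → ℕ) (t : ℕ) : MonomialOrder (PairVar t) :=
  letI := pvOrder num t
  MonomialOrder.lex

theorem pv_lt (num : ℕ → ℕ) (t : ℕ) (s s' : PairVar t)
    (h : min (num s.1.1) (num s.1.2) < min (num s'.1.1) (num s'.1.2) ∨
      (min (num s.1.1) (num s.1.2) = min (num s'.1.1) (num s'.1.2) ∧
      max (num s'.1.1) (num s'.1.2) < max (num s.1.1) (num s.1.2))) :
    (pvOrder num t).lt s s' := by
  change pvKey num t s < pvKey num t s'
  unfold pvKey
  rw [Prod.Lex.toLex_lt_toLex]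
  rcases h with h | ⟨h, h'⟩
  · exact Or.inl h
  · refine Or.inr ⟨h, ?_⟩
    rw [Prod.Lex.toLex_lt_toLex]
    exact Or.inl (OrderDual.toDual_lt_toDual.mpr h')

theorem lead_nested {K : Type} [Field K] (num : ℕ → ℕ) (t : ℕ)
    {F : List ℕ → MvPolynomial (PairVar t) K} (h : PfSys (xn K t) F) (c : ℕ) :
    ∀ M : List (ℕ × ℕ), (∀ p ∈ M, p.1 < t ∧ p.2 < t ∧ p.1 ≠ p.2 ∧ (3 ≤ p.1 ∨ 3 ≤ p.2) ∧
      num p.1 ≤ num p.2 ∧ num p.1 + num p.2 = c) →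
      M.Pairwise (fun p r => num p.1 < num r.1) →
      F (flatP M) ≠ 0 ∧
      (∀ s ∈ ((mo num t).degree (F (flatP M))).support, num s.1.1 + num s.1.2 = c) ∧
      (M ≠ [] → (mo num t).degree (F (flatP M)) ≠ 0)
  | [], _, _ => by
    have : F (flatP []) = 1 := h.nil
    rw [this]; simp
  | (v, w) :: M, hM, hP => by
    have ih := lead_nested num t h c M (fun p hp => hM p (List.mem_cons_of_mem _ hp))
      (List.pairwise_cons.mp hP).2
    obtain ⟨hv, hw, hvw, h3, hle, hc⟩ := hM (v, w) (by simp)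
    have hP1 := (List.pairwise_cons.mp hP).1
    dsimp only at hv hw hvw h3 hle hc hP1
    have hb : ∀ b ∈ flatP M, num v < num b ∧ num b < num w := by
      intro b hb
      simp only [flatP, List.mem_flatMap] at hb
      obtain ⟨p, hp, hbp⟩ := hb
      have := hM p (List.mem_cons_of_mem _ hp)
      have := hP1 p hp
      simp at hbp
      rcases hbp with rfl | rfl <;> omega
    obtain ⟨e, hes, he⟩ := xn_var K t v w hv hw hvw h3
    have emin : min (num e.1.1) (num e.1.2) = num v := by
      rcases hes with ⟨h1, h2⟩ | ⟨h1, h2⟩ <;> rw [h1, h2] <;> omega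
    have emax : max (num e.1.1) (num e.1.2) = num w := by
      rcases hes with ⟨h1, h2⟩ | ⟨h1, h2⟩ <;> rw [h1, h2] <;> omega
    have esum : num e.1.1 + num e.1.2 = c := by
      rcases hes with ⟨h1, h2⟩ | ⟨h1, h2⟩ <;> rw [h1, h2] <;> omega
    letI := pvOrder num t
    have hsup : ∀ a b, (a ≠ b → (num v < min (num a) (num b) ∨ (num v = min (num a) (num b) ∧
        max (num a) (num b) < num w))) →
        xn K t a b ∈ MvPolynomial.supported K {s | e < s} := by
      intro a b hab
      rcases xn_cases K t a b with h0 | ⟨hne, s, hs, hx⟩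
      · rw [h0]; exact Subalgebra.zero_mem _
      · have hmem : (MvPolynomial.X s : MvPolynomial (PairVar t) K) ∈
            MvPolynomial.supported K {s | e < s} := by
          rw [MvPolynomial.X_mem_supported]
          apply pv_lt
          rw [emin, emax]
          have := hab hne
          rcases hs with ⟨h1, h2⟩ | ⟨h1, h2⟩ <;> rw [h1, h2] <;> omega
        rcases hx with hx | hx <;> rw [hx]
        · exact hmem
        · exact Subalgebra.neg_mem _ hmem
    have key := lead_step h v w (flatP M) e he
      (fun b hbm => hsup v b fun _ => by have := hb b hbm; omega)
      (fun a ha b hbm => hsup a b fun hne => by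
        rw [List.mem_cons] at ha hbm
        rcases ha with rfl | ha <;> rcases hbm with rfl | hbm
        · exact absurd rfl hne
        · have := hb b hbm; omega
        · have := hb a ha; omega
        · have := hb a ha; have := hb b hbm; omega) ih.1
    have hfl : flatP ((v, w) :: M) = v :: w :: flatP M := rfl
    have hdeg : (mo num t).degree (F (v :: w :: flatP M)) =
      Finsupp.single e 1 + (mo num t).degree (F (flatP M)) := key.2
    rw [hfl]
    refine ⟨key.1, ?_, ?_⟩
    · intro s hs
      rw [hdeg] at hs
      have hs' := Finsupp.support_add hs
      rw [Finset.mem_union] at hs'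
      rcases hs' with hs' | hs'
      · have := Finsupp.support_single_subset hs'
        rw [Finset.mem_singleton] at this
        rw [this]; exact esum
      · exact ih.2.1 s hs'
    · intro _ h0
      rw [hdeg] at h0
      have := DFunLike.congr_fun h0 e
      simp at this

theorem lead_perm {K : Type} [Field K] (num : ℕ → ℕ) (t : ℕ)
    {F : List ℕ → MvPolynomial (PairVar t) K} (h : PfSys (xn K t) F) (c : ℕ)
    (M : List (ℕ × ℕ)) (hM : ∀ p ∈ M, p.1 < t ∧ p.2 < t ∧ p.1 ≠ p.2 ∧ (3 ≤ p.1 ∨ 3 ≤ p.2) ∧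
      num p.1 ≤ num p.2 ∧ num p.1 + num p.2 = c)
    (hP : M.Pairwise (fun p r => num p.1 < num r.1)) (l : List ℕ) (hn : l.Nodup)
    (hsub : ∀ a ∈ l, ∃ p ∈ M, a = p.1 ∨ a = p.2) (hlen : 2 * M.length = l.length) :
      F l ≠ 0 ∧
      (∀ s ∈ ((mo num t).degree (F l)).support, num s.1.1 + num s.1.2 = c) ∧
      (M ≠ [] → (mo num t).degree (F l) ≠ 0) := by
  have hp : l.Perm (flatP M) := by
    apply (List.subperm_of_subset hn ?_).perm_of_length_le
    · simp [flatP, List.length_flatMap]; omega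
    · intro a ha
      obtain ⟨p, hp, h'⟩ := hsub a ha
      simp only [flatP, List.mem_flatMap]
      exact ⟨p, hp, by simpa using h'⟩
  have key := lead_nested num t h c M hM hP
  rcases h.perm _ _ hp with h' | h' <;> rw [h']
  · exact key
  · rw [MonomialOrder.degree_neg]
    exact ⟨neg_ne_zero.mpr key.1, key.2⟩

theorem disj_of_sum {t : ℕ} {num : ℕ → ℕ} {d d' : PairVar t →₀ ℕ} {c c' : ℕ}
    (h : ∀ s ∈ d.support, num s.1.1 + num s.1.2 = c)
    (h' : ∀ s ∈ d'.support, num s.1.1 + num s.1.2 = c') (hc : c ≠ c') :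
    Disjoint d.support d'.support := by
  rw [Finset.disjoint_left]
  intro s hs hs'
  exact hc ((h s hs).symm.trans (h' s hs'))

/-- four polynomials with pairwise disjoint leading monomials -/
theorem four_reg {σ K : Type*} [Field K] {m : MonomialOrder σ} {a b c d : MvPolynomial σ K}
    (ha : a ≠ 0) (hb : b ≠ 0) (hc : c ≠ 0) (hd : d ≠ 0)
    (ha' : m.degree a ≠ 0) (hb' : m.degree b ≠ 0) (hc' : m.degree c ≠ 0)
    (hab : Disjoint (m.degree a).support (m.degree b).support)
    (hac : Disjoint (m.degree a).support (m.degree c).support)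
    (had : Disjoint (m.degree a).support (m.degree d).support)
    (hbc : Disjoint (m.degree b).support (m.degree c).support)
    (hbd : Disjoint (m.degree b).support (m.degree d).support)
    (hcd : Disjoint (m.degree c).support (m.degree d).support) :
    (∀ r, r * b ∈ Ideal.span {a} → r ∈ Ideal.span {a}) ∧
    (∀ r, r * c ∈ Ideal.span {a} ⊔ Ideal.span {b} → r ∈ Ideal.span {a} ⊔ Ideal.span {b}) ∧
    (∀ r, r * d ∈ Ideal.span {a} ⊔ Ideal.span {b} ⊔ Ideal.span {c} →
      r ∈ Ideal.span {a} ⊔ Ideal.span {b} ⊔ Ideal.span {c}) ∧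
    Ideal.span {a} ⊔ Ideal.span {b} ⊔ Ideal.span {c} ≠ ⊤ := by
  have g1 := (GB.bot (K := K) m).step ha (by simp) ha'
  rw [bot_sup_eq] at g1
  have g2 := g1.step hb (by simpa using hab) hb'
  have g3 := g2.step hc (by simpa using ⟨hbc, hac⟩) hc'
  refine ⟨g1.regular hb (by simpa using hab), g2.regular hc (by simpa using ⟨hbc, hac⟩),
    g3.regular hd (by simpa using ⟨hcd, hbd, had⟩), ?_⟩
  intro htop
  obtain ⟨s, hs, hle⟩ := g3.lead 1 (by rw [htop]; trivial) one_ne_zero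
  rw [m.degree_one] at hle
  exact (g3.elt s hs).1 (le_antisymm hle (zero_le))

def PL (s e n : ℕ) : List (ℕ × ℕ) := (List.range n).map (fun i => (s + i, e - i))

theorem mem_PL {s e n : ℕ} {p : ℕ × ℕ} (hp : p ∈ PL s e n) :
    ∃ i < n, p = (s + i, e - i) := by
  simp only [PL, List.mem_map, List.mem_range] at hp
  obtain ⟨i, hi, rfl⟩ := hp
  exact ⟨i, hi, rfl⟩

theorem ex_PL {s e n a : ℕ} (h : (s ≤ a ∧ a < s + n) ∨ (e < a + n ∧ a ≤ e)) :
    ∃ p ∈ PL s e n, a = p.1 ∨ a = p.2 := by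
  simp only [PL, List.mem_map, List.mem_range]
  rcases h with h | h
  · exact ⟨_, ⟨a - s, by omega, rfl⟩, Or.inl (by dsimp only; omega)⟩
  · exact ⟨_, ⟨e - a, by omega, rfl⟩, Or.inr (by dsimp only; omega)⟩

theorem length_PL (s e n : ℕ) : (PL s e n).length = n := by simp [PL]

theorem pairwise_PL (num : ℕ → ℕ) (s e n : ℕ) (hn : ∀ i j, i < j → j < n → num (s + i) < num (s + j)) :
    (PL s e n).Pairwise (fun p r => num p.1 < num r.1) := by
  rw [PL, List.pairwise_map]
  have h := List.pairwise_lt_range (n := n)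
  refine List.Pairwise.imp_of_mem ?_ h
  intro a b _ hb hab
  exact hn a b hab (List.mem_range.mp hb)

def UL (q : ℕ) : List ℕ := List.range' 3 q ++ List.range' (q + 4) q

theorem mem_UL {q a : ℕ} : a ∈ UL q ↔ (3 ≤ a ∧ a < 3 + q) ∨ (q + 4 ≤ a ∧ a < q + 4 + q) := by
  simp [UL, List.mem_range'_1]

theorem nodup_UL (q : ℕ) : (UL q).Nodup := by
  unfold UL
  rw [List.nodup_append]
  refine ⟨List.nodup_range', List.nodup_range', ?_⟩
  intro a ha b hb
  rw [List.mem_range'_1] at ha hb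
  omega

theorem length_UL (q : ℕ) : (UL q).length = 2 * q := by simp [UL]; omega

def num1 (q v : ℕ) : ℕ :=
  if v = 0 then q + 4 else if v = 1 then 2 * q + 6 else if v = 2 then 2 * q + 5 else v

def num2 (q v : ℕ) : ℕ :=
  if v = 0 then 2 * q + 6 else if v = 1 then 2 * q + 5 else v

def Good {K : Type} [Field K] (num : ℕ → ℕ) (t c : ℕ) (f : MvPolynomial (PairVar t) K) : Prop :=
  f ≠ 0 ∧ (∀ s ∈ ((mo num t).degree f).support, num s.1.1 + num s.1.2 = c)

section leads
variable {K : Type} [Field K] {q : ℕ} {F : List ℕ → MvPolynomial (PairVar (2 * q + 5)) K}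

theorem lead_core (num : ℕ → ℕ) (h : PfSys (xn K (2 * q + 5)) F) (c : ℕ)
    (M0 : List (ℕ × ℕ)) (s e n : ℕ) (M1 : List (ℕ × ℕ)) (l : List ℕ)
    (hM0 : ∀ p ∈ M0 ++ M1, p.1 < 2 * q + 5 ∧ p.2 < 2 * q + 5 ∧ p.1 ≠ p.2 ∧ (3 ≤ p.1 ∨ 3 ≤ p.2) ∧
      num p.1 ≤ num p.2 ∧ num p.1 + num p.2 = c)
    (hs : 2 ≤ s) (hse : s + e = c) (hn : s + 2 * n ≤ e + 1) (he : e < 2 * q + 5)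
    (hnum : ∀ v, 3 ≤ v → num v = v) (hs3 : 3 ≤ s)
    (hP0 : M0.Pairwise (fun p r => num p.1 < num r.1))
    (hP1 : M1.Pairwise (fun p r => num p.1 < num r.1))
    (hP01 : ∀ p ∈ M0, num p.1 < s ∧ ∀ r ∈ M1, num p.1 < num r.1)
    (hP11 : ∀ r ∈ M1, s + n ≤ num r.1)
    (hl : l.Nodup)
    (hsub : ∀ a ∈ l, (∃ p ∈ M0 ++ M1, a = p.1 ∨ a = p.2) ∨ 
      ((s ≤ a ∧ a < s + n) ∨ (e < a + n ∧ a ≤ e)))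
    (hlen : 2 * (M0.length + M1.length + n) = l.length) :
    F l ≠ 0 ∧ (∀ s ∈ ((mo num (2 * q + 5)).degree (F l)).support, num s.1.1 + num s.1.2 = c) ∧
      (l ≠ [] → (mo num (2 * q + 5)).degree (F l) ≠ 0) := by
  have key := lead_perm num (2 * q + 5) h c (M0 ++ (PL s e n ++ M1)) ?_ ?_ l hl ?_ ?_
  · refine ⟨key.1, key.2.1, fun h0 => key.2.2 fun h1 => h0 ?_⟩
    have := congrArg List.length h1
    simp [length_PL] at this
    rw [← List.length_eq_zero_iff, ← hlen]
    simp [this]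
  · intro p hp
    rw [List.mem_append, List.mem_append] at hp
    rcases hp with hp | hp | hp
    · exact hM0 p (List.mem_append_left _ hp)
    · obtain ⟨i, hi, rfl⟩ := mem_PL hp
      dsimp only
      rw [hnum _ (by omega), hnum _ (by omega)]
      omega
    · exact hM0 p (List.mem_append_right _ hp)
  · rw [List.pairwise_append, List.pairwise_append]
    refine ⟨hP0, ⟨pairwise_PL _ _ _ _ ?_, hP1, ?_⟩, ?_⟩
    · intro i j hij hj
      rw [hnum _ (by omega), hnum _ (by omega)]; omega
    · intro p hp r hr
      obtain ⟨i, hi, rfl⟩ := mem_PL hp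
      have := hP11 r hr
      dsimp only
      rw [hnum _ (by omega)]; omega
    · intro p hp r hr
      rw [List.mem_append] at hr
      rcases hr with hr | hr
      · obtain ⟨i, hi, rfl⟩ := mem_PL hr
        have := (hP01 p hp).1
        rw [show num (s + i, e - i).1 = s + i from hnum _ (by omega)]; omega
      · exact (hP01 p hp).2 r hr
  · intro a ha
    rcases hsub a ha with ⟨p, hp, h'⟩ | h'
    · refine ⟨p, ?_, h'⟩
      simp only [List.mem_append] at hp ⊢
      tauto
    · obtain ⟨p, hp, h'⟩ := ex_PL h'
      exact ⟨p, by simp [hp], h'⟩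
  · simp [length_PL]; omega

theorem num1_of (v : ℕ) (hv : 3 ≤ v) : num1 q v = v := by
  unfold num1; split_ifs <;> omega
theorem num2_of (v : ℕ) (hv : 3 ≤ v) : num2 q v = v := by
  unfold num2; split_ifs <;> omega

theorem lead_g (num : ℕ → ℕ) (hnum : ∀ v, 3 ≤ v → num v = v) (h : PfSys (xn K (2 * q + 5)) F) :
    F ((2 * q + 4) :: (q + 3) :: UL q) ≠ 0 ∧
    (∀ s ∈ ((mo num (2 * q + 5)).degree (F ((2 * q + 4) :: (q + 3) :: UL q))).support,
      num s.1.1 + num s.1.2 = 2 * q + 7) ∧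
    (((2 * q + 4) :: (q + 3) :: UL q) ≠ [] →
      (mo num (2 * q + 5)).degree (F ((2 * q + 4) :: (q + 3) :: UL q)) ≠ 0) := by
  apply lead_core num h (2 * q + 7) [] 3 (2 * q + 4) (q + 1) [] <;> try (first | omega | (simp; done))
  · simp only [List.nodup_cons, List.mem_cons, mem_UL, nodup_UL, and_true]; omega
  · intro a ha
    simp only [List.mem_cons, mem_UL] at ha
    right; omega
  · simp [length_UL]; omega

theorem lead_p (num : ℕ → ℕ) (hnum : ∀ v, 3 ≤ v → num v = v) (h : PfSys (xn K (2 * q + 5)) F) :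
    F (UL q) ≠ 0 ∧
    (∀ s ∈ ((mo num (2 * q + 5)).degree (F (UL q))).support,
      num s.1.1 + num s.1.2 = 2 * q + 6) ∧
    (UL q ≠ [] → (mo num (2 * q + 5)).degree (F (UL q)) ≠ 0) := by
  apply lead_core num h (2 * q + 6) [] 3 (2 * q + 3) q [] <;> try (first | omega | (simp; done))
  · exact nodup_UL q
  · intro a ha
    simp only [mem_UL] at ha
    right; omega
  · simp [length_UL]

theorem lead_f2 (h : PfSys (xn K (2 * q + 5)) F) :
    let l := 0 :: 2 :: (2 * q + 4) :: (q + 3) :: UL q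
    F l ≠ 0 ∧
    (∀ s ∈ ((mo (num1 q) (2 * q + 5)).degree (F l)).support,
      num1 q s.1.1 + num1 q s.1.2 = 2 * q + 8) ∧
    (l ≠ [] → (mo (num1 q) (2 * q + 5)).degree (F l) ≠ 0) := by
  intro l
  have e4 : num1 q (q + 4) = q + 4 := num1_of _ (by omega)
  have e3 : num1 q 3 = 3 := num1_of _ (by omega)
  have e0 : num1 q 0 = q + 4 := rfl
  have e2 : num1 q 2 = 2 * q + 5 := rfl
  apply lead_core (num1 q) h (2 * q + 8) [(3, 2)] 4 (2 * q + 4) q [(q + 4, 0)] <;>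
    try (first | omega | (simp; done))
  · simp [e4, e3, e0, e2]; omega
  · exact num1_of
  · simp [e3, e4]
  · simp [e4]; omega
  · simp only [l, List.nodup_cons, List.mem_cons, mem_UL, nodup_UL, and_true]; omega
  · intro a ha
    simp only [l, List.mem_cons, mem_UL] at ha
    simp; omega
  · simp [l, length_UL]; omega

theorem lead_f1 (h : PfSys (xn K (2 * q + 5)) F) :
    let l := 1 :: 2 :: (2 * q + 4) :: (q + 3) :: UL q
    F l ≠ 0 ∧
    (∀ s ∈ ((mo (num1 q) (2 * q + 5)).degree (F l)).support,
      num1 q s.1.1 + num1 q s.1.2 = 2 * q + 9) ∧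
    (l ≠ [] → (mo (num1 q) (2 * q + 5)).degree (F l) ≠ 0) := by
  intro l
  have e4 : num1 q 4 = 4 := num1_of _ (by omega)
  have e3 : num1 q 3 = 3 := num1_of _ (by omega)
  have e0 : num1 q 1 = 2 * q + 6 := rfl
  have e2 : num1 q 2 = 2 * q + 5 := rfl
  apply lead_core (num1 q) h (2 * q + 9) [(3, 1), (4, 2)] 5 (2 * q + 4) q [] <;>
    try (first | omega | (simp; done))
  · simp [e4, e3, e0, e2]; omega
  · exact num1_of
  · simp [e3, e4]
  · simp [e3, e4]
  · simp only [l, List.nodup_cons, List.mem_cons, mem_UL, nodup_UL, and_true]; omega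
  · intro a ha
    simp only [l, List.mem_cons, mem_UL] at ha
    simp; omega
  · simp [l, length_UL]; omega

theorem lead_f3 (h : PfSys (xn K (2 * q + 5)) F) :
    let l := 0 :: 1 :: (2 * q + 4) :: (q + 3) :: UL q
    F l ≠ 0 ∧
    (∀ s ∈ ((mo (num2 q) (2 * q + 5)).degree (F l)).support,
      num2 q s.1.1 + num2 q s.1.2 = 2 * q + 9) ∧
    (l ≠ [] → (mo (num2 q) (2 * q + 5)).degree (F l) ≠ 0) := by
  intro l
  have e4 : num2 q 4 = 4 := num2_of _ (by omega)
  have e3 : num2 q 3 = 3 := num2_of _ (by omega)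
  have e0 : num2 q 0 = 2 * q + 6 := rfl
  have e2 : num2 q 1 = 2 * q + 5 := rfl
  apply lead_core (num2 q) h (2 * q + 9) [(3, 0), (4, 1)] 5 (2 * q + 4) q [] <;>
    try (first | omega | (simp; done))
  · simp [e4, e3, e0, e2]; omega
  · exact num2_of
  · simp [e3, e4]
  · simp [e3, e4]
  · simp only [l, List.nodup_cons, List.mem_cons, mem_UL, nodup_UL, and_true]; omega
  · intro a ha
    simp only [l, List.mem_cons, mem_UL] at ha
    simp; omega
  · simp [l, length_UL]; omega

theorem lead_al (h : PfSys (xn K (2 * q + 5)) F) :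
    let l := 2 :: (q + 3) :: UL q
    F l ≠ 0 ∧
    (∀ s ∈ ((mo (num2 q) (2 * q + 5)).degree (F l)).support,
      num2 q s.1.1 + num2 q s.1.2 = 2 * q + 5) ∧
    (l ≠ [] → (mo (num2 q) (2 * q + 5)).degree (F l) ≠ 0) := by
  intro l
  have e3 : num2 q (2 * q + 3) = 2 * q + 3 := num2_of _ (by omega)
  have e2 : num2 q 2 = 2 := rfl
  apply lead_core (num2 q) h (2 * q + 5) [(2, 2 * q + 3)] 3 (2 * q + 2) q [] <;>
    try (first | omega | (simp; done))
  · simp [e3, e2]; omega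
  · exact num2_of
  · simp [e2]
  · simp only [l, List.nodup_cons, List.mem_cons, mem_UL, nodup_UL, and_true]; omega
  · intro a ha
    simp only [l, List.mem_cons, mem_UL] at ha
    simp; omega
  · simp [l, length_UL]; omega

theorem lead_be (h : PfSys (xn K (2 * q + 5)) F) :
    let l := 2 :: (2 * q + 4) :: UL q
    F l ≠ 0 ∧
    (∀ s ∈ ((mo (num2 q) (2 * q + 5)).degree (F l)).support,
      num2 q s.1.1 + num2 q s.1.2 = 2 * q + 6) ∧
    (l ≠ [] → (mo (num2 q) (2 * q + 5)).degree (F l) ≠ 0) := by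
  intro l
  have e3 : num2 q (2 * q + 4) = 2 * q + 4 := num2_of _ (by omega)
  have e2 : num2 q 2 = 2 := rfl
  apply lead_core (num2 q) h (2 * q + 6) [(2, 2 * q + 4)] 3 (2 * q + 3) q [] <;>
    try (first | omega | (simp; done))
  · simp [e3, e2]; omega
  · exact num2_of
  · simp [e2]
  · simp only [l, List.nodup_cons, List.mem_cons, mem_UL, nodup_UL, and_true]; omega
  · intro a ha
    simp only [l, List.mem_cons, mem_UL] at ha
    simp; omega
  · simp [l, length_UL]; omega

end leads

theorem mem_colon_span' {A : Type*} [CommRing A] (I : Ideal A) (a f : A)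
    (h : a ∈ I.colon (Ideal.span {f} : Ideal A)) : a * f ∈ I := by
  have := Submodule.mem_colon.mp h f (Ideal.mem_span_singleton_self f)
  simpa using this

theorem assemble {A : Type*} [CommRing A] (g f1 f2 f3 : A) (h0 : ∀ a, a * g = 0 → a = 0)
    (h1 : ∀ r, r * f1 ∈ Ideal.span {g} → r ∈ Ideal.span {g})
    (h2 : ∀ r, r * f2 ∈ Ideal.span {g} ⊔ Ideal.span {f1} → r ∈ Ideal.span {g} ⊔ Ideal.span {f1})
    (h3 : ∀ r, r * f3 * f3 ∈ Ideal.span {g} ⊔ Ideal.span {f1} ⊔ Ideal.span {f2} →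
      r * f3 ∈ Ideal.span {g} ⊔ Ideal.span {f1} ⊔ Ideal.span {f2})
    (ht : Ideal.span {g} ⊔ Ideal.span {f1} ⊔ Ideal.span {f2} ≠ ⊤) :
    IsDSequence ![g, f1, f2, f3] ∧ IsRegSeq ![g, f1, f2] := by
  have s0 : (![g, f1, f2, f3] '' {j | j < 0}) = ∅ := by ext x; simp
  have s1 : (![g, f1, f2, f3] '' {j | j < 1}) = {g} := by
    ext x; simp [Fin.exists_fin_succ, eq_comm]
  have s2 : (![g, f1, f2, f3] '' {j | j < 2}) = {g} ∪ {f1} := by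
    ext x; simp [Fin.exists_fin_succ, eq_comm]; tauto
  have s3 : (![g, f1, f2, f3] '' {j | j < 3}) = {g} ∪ {f1} ∪ {f2} := by
    ext x; simp [Fin.exists_fin_succ, eq_comm]; tauto
  have s4 : Set.range ![g, f1, f2, f3] = {g} ∪ {f1} ∪ {f2} ∪ {f3} := by
    ext x; simp [Fin.exists_fin_succ, eq_comm, or_assoc]
  have r0 : (![g, f1, f2] '' {j | j < 0}) = ∅ := by ext x; simp
  have r1 : (![g, f1, f2] '' {j | j < 1}) = {g} := by
    ext x; simp [Fin.exists_fin_succ, eq_comm]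
  have r2 : (![g, f1, f2] '' {j | j < 2}) = {g} ∪ {f1} := by
    ext x; simp [Fin.exists_fin_succ, eq_comm]; tauto
  have r3 : Set.range ![g, f1, f2] = {g} ∪ {f1} ∪ {f2} := by
    ext x; simp [Fin.exists_fin_succ, eq_comm, or_assoc]
  constructor
  · intro i
    apply le_antisymm
    · rintro a ⟨ha, hb⟩
      have ha' := mem_colon_span' _ _ _ ha
      change a ∈ Ideal.span (Set.range _) at hb
      fin_cases i
      · have ha' : a * g ∈ Ideal.span (![g, f1, f2, f3] '' {j | j < 0}) := ha'
        change a ∈ Ideal.span (![g, f1, f2, f3] '' {j | j < 0})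
        rw [s0, Ideal.span_empty] at ha' ⊢
        exact h0 a ha'
      · have ha' : a * f1 ∈ Ideal.span (![g, f1, f2, f3] '' {j | j < 1}) := ha'
        change a ∈ Ideal.span (![g, f1, f2, f3] '' {j | j < 1})
        rw [s1] at ha' ⊢
        exact h1 a ha'
      · have ha' : a * f2 ∈ Ideal.span (![g, f1, f2, f3] '' {j | j < 2}) := ha'
        change a ∈ Ideal.span (![g, f1, f2, f3] '' {j | j < 2})
        rw [s2, Ideal.span_union] at ha' ⊢
        exact h2 a ha'
      · have ha' : a * f3 ∈ Ideal.span (![g, f1, f2, f3] '' {j | j < 3}) := ha'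
        change a ∈ Ideal.span (![g, f1, f2, f3] '' {j | j < 3})
        rw [s3, Ideal.span_union, Ideal.span_union] at ha' ⊢
        rw [s4, Ideal.span_union, Ideal.span_union, Ideal.span_union] at hb
        obtain ⟨y, hy, z, hz, rfl⟩ := Submodule.mem_sup.mp hb
        obtain ⟨r, rfl⟩ := Ideal.mem_span_singleton'.mp hz
        refine Ideal.add_mem _ hy (h3 r ?_)
        have e : r * f3 * f3 = (y + r * f3) * f3 - y * f3 := by ring
        rw [e]
        exact Ideal.sub_mem _ ha' (Ideal.mul_mem_right _ _ hy)
    · refine le_inf ?_ (Ideal.span_mono (Set.image_subset_range _ _))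
      intro a ha
      rw [Submodule.mem_colon]
      intro p _
      rw [smul_eq_mul]
      exact Ideal.mul_mem_right _ _ ha
  · constructor
    · intro i a ha'
      fin_cases i
      · have ha' : a * g ∈ Ideal.span (![g, f1, f2] '' {j | j < 0}) := ha'
        change a ∈ Ideal.span (![g, f1, f2] '' {j | j < 0})
        rw [r0, Ideal.span_empty] at ha' ⊢
        exact h0 a ha'
      · have ha' : a * f1 ∈ Ideal.span (![g, f1, f2] '' {j | j < 1}) := ha'
        change a ∈ Ideal.span (![g, f1, f2] '' {j | j < 1})
        rw [r1] at ha' ⊢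
        exact h1 a ha'
      · have ha' : a * f2 ∈ Ideal.span (![g, f1, f2] '' {j | j < 2}) := ha'
        change a ∈ Ideal.span (![g, f1, f2] '' {j | j < 2})
        rw [r2, Ideal.span_union] at ha' ⊢
        exact h2 a ha'
    · rw [r3, Ideal.span_union, Ideal.span_union]
      exact ht

theorem mem_three {A : Type*} [CommRing A] {a b c d : A}
    (h : d ∈ Ideal.span {a} ⊔ Ideal.span {b} ⊔ Ideal.span {c}) :
    ∃ y w z, d = y * a + w * b + z * c := by
  obtain ⟨u, hu, v, hv, e⟩ := Submodule.mem_sup.mp h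
  obtain ⟨u1, hu1, u2, hu2, e'⟩ := Submodule.mem_sup.mp hu
  obtain ⟨y, hy⟩ := Ideal.mem_span_singleton'.mp hu1
  obtain ⟨w, hw⟩ := Ideal.mem_span_singleton'.mp hu2
  obtain ⟨z, hz⟩ := Ideal.mem_span_singleton'.mp hv
  exact ⟨y, w, z, by rw [hy, hw, hz, e', e]⟩

theorem key_claim {A : Type*} [CommRing A] (g f1 f2 f3 α β p : A)
    (J Q : Ideal A)
    (hg : g ∈ Q) (hJg : g ∈ J)
    (hJ : J = Ideal.span {g} ⊔ Ideal.span {f1} ⊔ Ideal.span {f2})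
    (hQ : Q = Ideal.span {g} ⊔ Ideal.span {α} ⊔ Ideal.span {β})
    (hp : ∀ r, r * p ∈ J → r ∈ J) (hf : ∀ r, r * f3 ∈ Q → r ∈ Q)
    (p1 : p * f1 ∈ Q) (p2 : p * f2 ∈ Q) (ha : f3 * α ∈ J) (hb : f3 * β ∈ J) (r : A)
    (hr : r * f3 * f3 ∈ J) : r * f3 ∈ J := by
  have hJQ : ∀ a ∈ J, a * p ∈ Q := by
    intro a h
    rw [hJ] at h
    obtain ⟨y, w, z, rfl⟩ := mem_three h
    have : (y * g + w * f1 + z * f2) * p = (y * p) * g + w * (p * f1) + z * (p * f2) := by ring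
    rw [this]
    exact Q.add_mem (Q.add_mem (Q.mul_mem_left _ hg) (Q.mul_mem_left _ p1)) (Q.mul_mem_left _ p2)
  have hQJ : ∀ a ∈ Q, a * f3 ∈ J := by
    intro a h
    rw [hQ] at h
    obtain ⟨y, w, z, rfl⟩ := mem_three h
    have : (y * g + w * α + z * β) * f3 = (y * f3) * g + w * (f3 * α) + z * (f3 * β) := by ring
    rw [this]
    exact J.add_mem (J.add_mem (J.mul_mem_left _ hJg) (J.mul_mem_left _ ha)) (J.mul_mem_left _ hb)
  have h1 : r * p ∈ Q := by
    apply hf; apply hf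
    have := hJQ _ hr
    convert this using 1; ring
  apply hp
  have := hQJ _ h1
  convert this using 1; ring

theorem main_canon {K : Type} [Field K] {q : ℕ}
    {F : List ℕ → MvPolynomial (PairVar (2 * q + 5)) K} (h : PfSys (xn K (2 * q + 5)) F)
    (g f1 f2 f3 : MvPolynomial (PairVar (2 * q + 5)) K)
    (eg : g = F ((2 * q + 4) :: (q + 3) :: UL q) ∨ g = -F ((2 * q + 4) :: (q + 3) :: UL q))
    (e1 : f1 = F (1 :: 2 :: (2 * q + 4) :: (q + 3) :: UL q) ∨
      f1 = -F (1 :: 2 :: (2 * q + 4) :: (q + 3) :: UL q))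
    (e2 : f2 = F (0 :: 2 :: (2 * q + 4) :: (q + 3) :: UL q) ∨
      f2 = -F (0 :: 2 :: (2 * q + 4) :: (q + 3) :: UL q))
    (e3 : f3 = F (0 :: 1 :: (2 * q + 4) :: (q + 3) :: UL q) ∨
      f3 = -F (0 :: 1 :: (2 * q + 4) :: (q + 3) :: UL q)) :
    IsDSequence ![g, f1, f2, f3] ∧ IsRegSeq ![g, f1, f2] := by
  have sg : Ideal.span {g} = Ideal.span {F ((2 * q + 4) :: (q + 3) :: UL q)} := by
    rcases eg with rfl | rfl
    · rfl
    · exact Ideal.span_singleton_neg _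
  have s1 : Ideal.span {f1} = Ideal.span {F (1 :: 2 :: (2 * q + 4) :: (q + 3) :: UL q)} := by
    rcases e1 with rfl | rfl
    · rfl
    · exact Ideal.span_singleton_neg _
  have s2 : Ideal.span {f2} = Ideal.span {F (0 :: 2 :: (2 * q + 4) :: (q + 3) :: UL q)} := by
    rcases e2 with rfl | rfl
    · rfl
    · exact Ideal.span_singleton_neg _
  have mneg : ∀ (J : Ideal (MvPolynomial (PairVar (2 * q + 5)) K)) (r x y : _),
      (x = y ∨ x = - y) → (r * x ∈ J ↔ r * y ∈ J) := by
    rintro J r x y (rfl | rfl)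
    · rfl
    · rw [mul_neg, neg_mem_iff]
  obtain ⟨ng, dg, zg⟩ := lead_g (num1 q) num1_of h
  obtain ⟨np, dp, zp⟩ := lead_p (num1 q) num1_of h
  obtain ⟨n1, d1, z1⟩ := lead_f1 h
  obtain ⟨n2, d2, z2⟩ := lead_f2 h
  obtain ⟨ng', dg', zg'⟩ := lead_g (num2 q) num2_of h
  obtain ⟨na, da, za⟩ := lead_al h
  obtain ⟨nb, db, zb⟩ := lead_be h
  obtain ⟨n3, d3, z3⟩ := lead_f3 h
  obtain ⟨A1, A2, A3, A4⟩ := four_reg ng n1 n2 np (zg (by simp)) (z1 (by simp)) (z2 (by simp))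
    (disj_of_sum dg d1 (by omega)) (disj_of_sum dg d2 (by omega)) (disj_of_sum dg dp (by omega))
    (disj_of_sum d1 d2 (by omega)) (disj_of_sum d1 dp (by omega)) (disj_of_sum d2 dp (by omega))
  obtain ⟨-, -, B3, -⟩ := four_reg ng' na nb n3 (zg' (by simp)) (za (by simp)) (zb (by simp))
    (disj_of_sum dg' da (by omega)) (disj_of_sum dg' db (by omega)) (disj_of_sum dg' d3 (by omega))
    (disj_of_sum da db (by omega)) (disj_of_sum da d3 (by omega)) (disj_of_sum db d3 (by omega))
  have left1 : ∀ a b c : MvPolynomial (PairVar (2 * q + 5)) K,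
      a ∈ Ideal.span {a} ⊔ Ideal.span {b} ⊔ Ideal.span {c} := fun a b c =>
    Ideal.mem_sup_left (Ideal.mem_sup_left (Ideal.mem_span_singleton_self a))
  have left2 : ∀ a b c : MvPolynomial (PairVar (2 * q + 5)) K,
      b ∈ Ideal.span {a} ⊔ Ideal.span {b} ⊔ Ideal.span {c} := fun a b c =>
    Ideal.mem_sup_left (Ideal.mem_sup_right (Ideal.mem_span_singleton_self b))
  have left3 : ∀ a b c : MvPolynomial (PairVar (2 * q + 5)) K,
      c ∈ Ideal.span {a} ⊔ Ideal.span {b} ⊔ Ideal.span {c} := fun a b c =>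
    Ideal.mem_sup_right (Ideal.mem_span_singleton_self c)
  have key := key_claim _ _ _ (F (0 :: 1 :: (2 * q + 4) :: (q + 3) :: UL q)) _ _ (F (UL q)) _ _
    (left1 _ _ _) (left1 _ _ _) rfl rfl A3 B3 ?_ ?_ ?_ ?_
  · apply assemble
    · intro a ha
      refine (mul_eq_zero.mp ha).resolve_right ?_
      rcases eg with rfl | rfl
      · exact ng
      · exact neg_ne_zero.mpr ng
    · intro r
      rw [sg, mneg _ _ _ _ e1]; exact A1 r
    · intro r
      rw [sg, s1, mneg _ _ _ _ e2]; exact A2 r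
    · intro r
      rw [sg, s1, s2, mneg _ _ _ _ e3, mneg _ _ _ _ e3, mul_right_comm, mneg _ _ _ _ e3]
      exact key r
    · rw [sg, s1, s2]; exact A4
  · rw [h.rel1 1 2 (2 * q + 4) (q + 3) (UL q)]
    exact neg_mem (add_mem (sub_mem (Ideal.mul_mem_right _ _ (left1 _ _ _))
      (Ideal.mul_mem_right _ _ (left2 _ _ _))) (Ideal.mul_mem_right _ _ (left3 _ _ _)))
  · rw [h.rel1 0 2 (2 * q + 4) (q + 3) (UL q)]
    exact neg_mem (add_mem (sub_mem (Ideal.mul_mem_right _ _ (left1 _ _ _))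
      (Ideal.mul_mem_right _ _ (left2 _ _ _))) (Ideal.mul_mem_right _ _ (left3 _ _ _)))
  · have := h.rel2 0 1 2 (2 * q + 4) ((q + 3) :: UL q)
    rw [show ∀ a b c d : MvPolynomial (PairVar (2 * q + 5)) K,
      (a - b + c - d = 0 ↔ c = b - a + d) from fun a b c d => by
        constructor <;> intro h <;> linear_combination h] at this
    rw [this]
    exact add_mem (sub_mem (Ideal.mul_mem_right _ _ (left3 _ _ _))
      (Ideal.mul_mem_right _ _ (left2 _ _ _))) (Ideal.mul_mem_left _ _ (left1 _ _ _))
  · have := h.rel2 0 1 2 (q + 3) ((2 * q + 4) :: UL q)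
    rw [show ∀ a b c d : MvPolynomial (PairVar (2 * q + 5)) K,
      (a - b + c - d = 0 ↔ c = b - a + d) from fun a b c d => by
        constructor <;> intro h <;> linear_combination h] at this
    have sw : ((q + 3) :: (2 * q + 4) :: UL q).Perm ((2 * q + 4) :: (q + 3) :: UL q) :=
      List.Perm.swap _ _ _
    have t0 := h.perm _ _ sw
    have t1 := h.perm _ _ ((sw.cons 2).cons 1)
    have t2 := h.perm _ _ ((sw.cons 2).cons 0)
    have t3 := h.perm _ _ ((sw.cons 1).cons 0)
    rw [mul_comm (F _) (F _), ← mneg _ _ _ _ t3, mul_comm (F _) (F _), this]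
    refine add_mem (sub_mem ?_ ?_) ?_
    · rw [mul_comm (F _) (F _), mneg _ _ _ _ t2]; exact Ideal.mul_mem_left _ _ (left3 _ _ _)
    · rw [mul_comm (F _) (F _), mneg _ _ _ _ t1]; exact Ideal.mul_mem_left _ _ (left2 _ _ _)
    · rw [mneg _ _ _ _ t0]; exact Ideal.mul_mem_left _ _ (left1 _ _ _)

theorem ofFn_perm {n : ℕ} (u : Fin n → ℕ) (hu : Function.Injective u) (l : List ℕ)
    (hl : l.length ≤ n) (hsub : ∀ k, u k ∈ l) : (List.ofFn u).Perm l := by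
  apply (List.subperm_of_subset (List.nodup_ofFn.mpr hu) ?_).perm_of_length_le
  · simpa using hl
  · intro a ha
    obtain ⟨k, rfl⟩ := List.mem_ofFn.mp ha
    exact hsub k

theorem Xmat_xn (K : Type) [Field K] (t : ℕ) (i j : Fin t) : Xmat K t i j = xn K t i j := by
  unfold xn
  rw [dif_pos ⟨i.2, j.2⟩]

theorem pfaffian_dSequence_odd (K : Type) [Field K] (q : ℕ) :
    letI t := 2 * q + 5
    letI B := MvPolynomial (PairVar t) K
    letI X := Xmat K t
    letI pf123 : B := pfaffian (2 * q + 2) (X.submatrix emb3 emb3)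
    letI pf1 : B := pfaffian (2 * q + 4) (X.submatrix (emb1 0) (emb1 0))
    letI pf2 : B := pfaffian (2 * q + 4) (X.submatrix (emb1 1) (emb1 1))
    letI pf3 : B := pfaffian (2 * q + 4) (X.submatrix (emb1 2) (emb1 2))
    IsDSequence ![pf123, pf1, pf2, pf3] ∧ IsRegSeq ![pf123, pf1, pf2] := by
  obtain ⟨F, h⟩ := exists_pfSys (xn K (2 * q + 5)) (xn_self K _) (xn_skew K _)
  have inj : ∀ a, Function.Injective (fun k : Fin (2 * q + 4) => ((emb1 a k : Fin _) : ℕ)) := by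
    intro a k k' hk
    apply Fin.ext
    simp only [emb1] at hk
    split_ifs at hk <;> omega
  refine main_canon h _ _ _ _ ?_ ?_ ?_ ?_
  · rw [pfaffian_eq h (2 * q + 2) (fun k => ((emb3 k : Fin _) : ℕ))
      ((Xmat K (2 * q + 5)).submatrix emb3 emb3)
      (fun i j => Xmat_xn K _ _ _)]
    refine h.perm _ _ (ofFn_perm _ ?_ _ ?_ ?_)
    · intro k k' hk
      apply Fin.ext
      simp only [emb3] at hk
      omega
    · simp [length_UL]
    · intro k
      have := k.2
      simp only [emb3, List.mem_cons, mem_UL]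
      omega
  · rw [pfaffian_eq h (2 * q + 4) (fun k => ((emb1 0 k : Fin _) : ℕ))
      ((Xmat K (2 * q + 5)).submatrix (emb1 0) (emb1 0))
      (fun i j => Xmat_xn K _ _ _)]
    refine h.perm _ _ (ofFn_perm _ (inj 0) _ ?_ ?_)
    · simp [length_UL]
    · intro k
      have := k.2
      simp only [emb1, List.mem_cons, mem_UL]
      split_ifs <;> omega
  · rw [pfaffian_eq h (2 * q + 4) (fun k => ((emb1 1 k : Fin _) : ℕ))
      ((Xmat K (2 * q + 5)).submatrix (emb1 1) (emb1 1))
      (fun i j => Xmat_xn K _ _ _)]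
    refine h.perm _ _ (ofFn_perm _ (inj 1) _ ?_ ?_)
    · simp [length_UL]
    · intro k
      have := k.2
      simp only [emb1, List.mem_cons, mem_UL]
      split_ifs <;> omega
  · rw [pfaffian_eq h (2 * q + 4) (fun k => ((emb1 2 k : Fin _) : ℕ))
      ((Xmat K (2 * q + 5)).submatrix (emb1 2) (emb1 2))
      (fun i j => Xmat_xn K _ _ _)]
    refine h.perm _ _ (ofFn_perm _ (inj 2) _ ?_ ?_)
    · simp [length_UL]
    · intro k
      have := k.2
      simp only [emb1, List.mem_cons, mem_UL]
      split_ifs <;> omega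
end
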